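/- Let r ≥ 4 and let p > 3 be prime, and let V be a quasi-Hermitian variety of PG(r,p^4) whose characteristic vector v^V belongs to C_p. Then no line of PG(r,p^4) meets V in exactly i points for any i with 1 < i < p^2 + 1, and no line of PG(r,p^4) meets V in exactly p^4 - p + 1 points. Consequently every line of PG(r,p^4) meets V in exactly 1, p^2 + 1, or p^4 + 1 points. -/

import Mathlib

/-!
Common framework: `ProjPoint F n` is the set of points of the projective space
PG(n-1, |F|) (so PG(r, q²) corresponds to `n = r + 1` and `Fintype.card F = q ^ 2`).
Projective subspaces of projective dimension `k` are the submodules of `Fin n → F`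
of `finrank` equal to `k + 1`; lines have finrank 2, planes finrank 3 and
hyperplanes finrank `n - 1 = r`.
-/

open Module Matrix

/-- The points of the projective space PG(n-1, |F|): one-dimensional subspaces
of `F^n`. -/
def ProjPoint (F : Type) [Field F] (n : ℕ) : Type :=
  {W : Submodule F (Fin n → F) // finrank F W = 1}

/-- The set of projective points lying in a given subspace `W`. -/
def pointsIn (F : Type) [Field F] (n : ℕ) (W : Submodule F (Fin n → F)) :
    Set (ProjPoint F n) :=
  {P | P.1 ≤ W}

/-- The number of points of `V` lying in the subspace `W`. -/
noncomputable def secant (F : Type) [Field F] (n : ℕ) (V : Set (ProjPoint F n))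
    (W : Submodule F (Fin n → F)) : ℕ :=
  (V ∩ pointsIn F n W).ncard

/-- The characteristic vector of a set of projective points, with values in `F_p`. -/
noncomputable def charVec (F : Type) [Field F] (p n : ℕ) (S : Set (ProjPoint F n)) :
    ProjPoint F n → ZMod p :=
  Set.indicator S 1

/-- `C_p`: the `F_p`-code spanned by the characteristic vectors of hyperplanes. -/
def hypCode (F : Type) [Field F] (p n : ℕ) :
    Submodule (ZMod p) (ProjPoint F n → ZMod p) :=
  Submodule.span (ZMod p)
    {v | ∃ H : Submodule F (Fin n → F), finrank F H = n - 1 ∧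
      v = charVec F p n (pointsIn F n H)}

/-- A quasi-Hermitian variety of PG(r, q²): it has the size of a non-singular
Hermitian variety and the same two intersection numbers with hyperplanes.
(All identities are stated multiplied through by `q² - 1`.) -/
def IsQuasiHermitian (F : Type) [Field F] (q r : ℕ)
    (V : Set (ProjPoint F (r + 1))) : Prop :=
  (V.ncard : ℤ) * ((q : ℤ) ^ 2 - 1)
      = ((q : ℤ) ^ (r + 1) + (-1) ^ r) * ((q : ℤ) ^ r - (-1) ^ r) ∧
  ∀ H : Submodule F (Fin (r + 1) → F), finrank F H = r →
    ((secant F (r + 1) V H : ℤ) * ((q : ℤ) ^ 2 - 1)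
        = ((q : ℤ) ^ r + (-1) ^ (r - 1)) * ((q : ℤ) ^ (r - 1) - (-1) ^ (r - 1)) ∨
     (secant F (r + 1) V H : ℤ) * ((q : ℤ) ^ 2 - 1)
        = ((q : ℤ) ^ 2 - 1)
          + (q : ℤ) ^ 2 * (((q : ℤ) ^ (r - 1) + (-1) ^ r) * ((q : ℤ) ^ (r - 2) - (-1) ^ r)))

/-- The zero set, in PG(n-1,|F|), of the Hermitian form `x ↦ xᵀ A x^(q)`. -/
def hermSet (F : Type) [Field F] (q n : ℕ) (A : Matrix (Fin n) (Fin n) F) :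
    Set (ProjPoint F n) :=
  {P | ∀ x ∈ P.1, ∑ i, ∑ j, x i * A i j * (x j) ^ q = 0}

/-- A non-singular Hermitian variety of PG(n-1, q²). -/
def IsNonsingHermitian (F : Type) [Field F] (q n : ℕ)
    (V : Set (ProjPoint F n)) : Prop :=
  ∃ A : Matrix (Fin n) (Fin n) F, IsUnit A.det ∧
    Aᵀ = A.map (fun a => a ^ q) ∧ V = hermSet F q n A

/-- A singular Hermitian variety of PG(n-1, q²) whose singular space (the radical
of the Hermitian form) has projective dimension `d`. -/
def IsSingularHermitian (F : Type) [Field F] (q n d : ℕ)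
    (S : Set (ProjPoint F n)) : Prop :=
  ∃ A : Matrix (Fin n) (Fin n) F,
    Aᵀ = A.map (fun a => a ^ q) ∧
    finrank F (LinearMap.ker (Matrix.toLin' Aᵀ)) = d + 1 ∧
    S = hermSet F q n A

/-- A `d`-singular quasi-Hermitian variety of PG(r, q²). -/
def IsSingularQuasiHermitian (F : Type) [Field F] (q r d : ℕ)
    (S : Set (ProjPoint F (r + 1))) : Prop :=
  ∃ S₀ : Set (ProjPoint F (r + 1)), IsSingularHermitian F q (r + 1) d S₀ ∧
    S.ncard = S₀.ncard ∧
    ∀ H : Submodule F (Fin (r + 1) → F), finrank F H = r →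
      ∃ H₀ : Submodule F (Fin (r + 1) → F), finrank F H₀ = r ∧
        secant F (r + 1) S H = secant F (r + 1) S₀ H₀

/-- `U` is a classical unital (Hermitian curve) of the plane `π` of PG(n-1, q²):
in some coordinatization `e` of `π`, it is the zero set of a non-degenerate
Hermitian form on `F³`. -/
def IsClassicalUnital (F : Type) [Field F] (q n : ℕ)
    (π : Submodule F (Fin n → F)) (U : Set (ProjPoint F n)) : Prop :=
  ∃ e : (Fin 3 → F) →ₗ[F] (Fin n → F), LinearMap.ker e = ⊥ ∧ LinearMap.range e = π ∧
    ∃ A : Matrix (Fin 3) (Fin 3) F, IsUnit A.det ∧ Aᵀ = A.map (fun a => a ^ q) ∧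
      U = {P | ∃ y : Fin 3 → F, y ≠ 0 ∧ P.1 = Submodule.span F {e y} ∧
        ∑ i, ∑ j, y i * A i j * (y j) ^ q = 0}


section PlanePart

open Finset Classical

/-- An abstract finite projective plane of order `p ^ 4` with a code on its points. -/
structure PlaneCode (P L : Type) [Fintype P] [Fintype L] (p : ℕ) where
  I : P → L → Prop
  C : Submodule (ZMod p) (P → ZMod p)
  join : ∀ x y, x ≠ y → ∃ l, I x l ∧ I y l
  meet : ∀ l m, l ≠ m → ∃ x, I x l ∧ I x m
  uniq : ∀ x y l m, I x l → I y l → I x m → I y m → x ≠ y → l = m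
  cardL : ∀ l, (univ.filter (fun x => I x l)).card = p ^ 4 + 1
  cardP : ∀ x, (univ.filter (fun l => I x l)).card = p ^ 4 + 1
  line_mem : ∀ l, (fun x => if I x l then (1 : ZMod p) else 0) ∈ C
  one_mem : (fun _ => (1 : ZMod p)) ∈ C
  key : ∀ f ∈ C, ∀ R l l', I R l → I R l' → l ≠ l' → f R = 0 →
    (univ.filter (fun x => I x l' ∧ f x ≠ 0)).card
      + (univ.filter (fun x => I x l ∧ f x ≠ 0)).card
        * (p ^ 4 + 1 - (univ.filter (fun x => I x l ∧ f x ≠ 0)).card)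
      ≤ (univ.filter (fun x => f x ≠ 0)).card
  noPP : ∀ (H : Finset P) (M : Finset L),
    (∀ x ∈ H, ∀ y ∈ H, x ≠ y → ∃ l ∈ M, I x l ∧ I y l) →
    (∀ l ∈ M, ∀ m ∈ M, l ≠ m → ∃ x ∈ H, I x l ∧ I x m) →
    (∀ l ∈ M, (univ.filter (fun x => I x l ∧ x ∈ H)).card = p) →
    (∃ a ∈ H, ∃ l ∈ M, ∃ m ∈ M, ∃ g ∈ M, l ≠ m ∧ I a l ∧ I a m ∧ ¬ I a g) → False

namespace PlaneCode

variable {P L : Type} [Fintype P] [Fintype L] {p : ℕ} (G : PlaneCode P L p)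

/-- number of points of `S` on `l`. -/
noncomputable def sec (S : Finset P) (l : L) : ℕ :=
  (univ.filter (fun x => G.I x l ∧ x ∈ S)).card

/-- number of lines of `M` through `x`. -/
noncomputable def deg (M : Finset L) (x : P) : ℕ := (M.filter (fun l => G.I x l)).card

noncomputable def lns (x : P) : Finset L := univ.filter (fun l => G.I x l)

noncomputable def pts (l : L) : Finset P := univ.filter (fun x => G.I x l)

lemma mem_lns {x : P} {l : L} : l ∈ G.lns x ↔ G.I x l := by simp [lns]
lemma mem_pts {x : P} {l : L} : x ∈ G.pts l ↔ G.I x l := by simp [pts]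
lemma card_lns (x : P) : (G.lns x).card = p ^ 4 + 1 := G.cardP x
lemma card_pts (l : L) : (G.pts l).card = p ^ 4 + 1 := G.cardL l

lemma sec_eq (S : Finset P) (l : L) : G.sec S l = ((G.pts l).filter (· ∈ S)).card := by
  simp [sec, pts, filter_filter]

lemma sec_le (S : Finset P) (l : L) : G.sec S l ≤ p ^ 4 + 1 := by
  rw [sec_eq, ← G.card_pts l]; exact card_filter_le _ _

lemma holes_eq (S : Finset P) (l : L) :
    ((G.pts l).filter (· ∉ S)).card + G.sec S l = p ^ 4 + 1 := by
  rw [sec_eq, ← G.card_pts l, add_comm]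
  exact card_filter_add_card_filter_not _

lemma sec_mono {S T : Finset P} (h : S ⊆ T) (l : L) : G.sec S l ≤ G.sec T l := by
  unfold sec
  apply card_le_card
  intro x; simp; intro a b; exact ⟨a, h b⟩

/-- the number of common lines of two points -/
lemma common_lines (R x : P) :
    ((G.lns R).filter (fun l => G.I x l)).card = if x = R then p ^ 4 + 1 else 1 := by
  split_ifs with h
  · subst h
    rw [← G.card_lns x]; congr 1; ext l; simp [mem_lns]
  · obtain ⟨l, h1, h2⟩ := G.join x R h
    rw [card_eq_one]; refine ⟨l, ?_⟩
    ext m; simp only [mem_filter, mem_lns, mem_singleton]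
    constructor
    · rintro ⟨a, b⟩; exact G.uniq x R m l b a h1 h2 h
    · rintro rfl; exact ⟨h2, h1⟩

lemma common_pts (l m : L) :
    ((G.pts l).filter (fun x => G.I x m)).card = if m = l then p ^ 4 + 1 else 1 := by
  split_ifs with h
  · subst h
    rw [← G.card_pts m]; congr 1; ext l; simp [mem_pts]
  · obtain ⟨x, h1, h2⟩ := G.meet m l h
    rw [card_eq_one]; refine ⟨x, ?_⟩
    ext y; simp only [mem_filter, mem_pts, mem_singleton]
    constructor
    · rintro ⟨a, b⟩; by_contra hne; exact h (G.uniq y x m l b h1 a h2 hne)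
    · rintro rfl; exact ⟨h2, h1⟩

lemma sum_sec_lns (S : Finset P) (R : P) :
    ∑ l ∈ G.lns R, G.sec S l = S.card + if R ∈ S then p ^ 4 else 0 := by
  have h1 : ∀ l, G.sec S l = ∑ x ∈ S, if G.I x l then 1 else 0 := by
    intro l; rw [sec, ← card_filter]; congr 1; ext x; simp [and_comm]
  simp_rw [h1]
  rw [sum_comm]
  have h2 : ∀ x ∈ S, (∑ l ∈ G.lns R, if G.I x l then 1 else 0)
      = 1 + if R = x then p ^ 4 else 0 := by
    intro x _
    rw [← card_filter, common_lines]; split_ifs with a b b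
    · ring
    · exact absurd a.symm b
    · exact absurd b.symm a
    · rfl
  rw [sum_congr rfl h2, sum_add_distrib]
  simp

lemma count_off {S : Finset P} {R : P} (h : R ∉ S) : ∑ l ∈ G.lns R, G.sec S l = S.card := by
  rw [sum_sec_lns, if_neg h]; rfl

lemma count_on {S : Finset P} {R : P} (h : R ∈ S) :
    ∑ l ∈ G.lns R, G.sec S l = S.card + p ^ 4 := by
  rw [sum_sec_lns, if_pos h]

lemma sum_deg_pts (M : Finset L) (l : L) :
    ∑ x ∈ G.pts l, G.deg M x = M.card + if l ∈ M then p ^ 4 else 0 := by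
  have h1 : ∀ x, G.deg M x = ∑ m ∈ M, if G.I x m then 1 else 0 := by
    intro x; rw [deg, ← card_filter]
  simp_rw [h1]
  rw [sum_comm]
  have h2 : ∀ m ∈ M, (∑ x ∈ G.pts l, if G.I x m then 1 else 0)
      = 1 + if l = m then p ^ 4 else 0 := by
    intro x _
    rw [← card_filter, common_pts]; split_ifs with a b b
    · ring
    · exact absurd a.symm b
    · exact absurd b.symm a
    · rfl
  rw [sum_congr rfl h2, sum_add_distrib]
  simp

/-- support -/
noncomputable def supp (f : P → ZMod p) : Finset P := univ.filter (fun x => f x ≠ 0)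

lemma mem_supp {f : P → ZMod p} {x : P} : x ∈ supp f ↔ f x ≠ 0 := by simp [supp]

lemma key' {f : P → ZMod p} (hf : f ∈ G.C) {R : P} {l l' : L} (h1 : G.I R l) (h2 : G.I R l')
    (h : l ≠ l') (hR : f R = 0) :
    G.sec (supp f) l' + G.sec (supp f) l * (p ^ 4 + 1 - G.sec (supp f) l) ≤ (supp f).card := by
  have := G.key f hf R l l' h1 h2 h hR
  simpa [sec, supp] using this

lemma exists_hole {S : Finset P} {l : L} (h : G.sec S l < p ^ 4 + 1) :
    ∃ R, G.I R l ∧ R ∉ S := by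
  have := G.holes_eq S l
  have h2 : 0 < ((G.pts l).filter (· ∉ S)).card := by omega
  obtain ⟨R, hR⟩ := card_pos.1 h2
  simp only [mem_filter, mem_pts] at hR
  exact ⟨R, hR⟩

lemma exists_mem {S : Finset P} {l : L} (h : 0 < G.sec S l) :
    ∃ R, G.I R l ∧ R ∈ S := by
  rw [sec] at h
  obtain ⟨R, hR⟩ := card_pos.1 h
  exact ⟨R, by simpa using hR⟩

lemma exists_other_line (hp : 0 < p) (R : P) (l : L) : ∃ l', l' ≠ l ∧ G.I R l' := by
  have h : 1 < (G.lns R).card := by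
    rw [card_lns]; have : 0 < p ^ 4 := by positivity
    omega
  obtain ⟨a, ha, b⟩ := exists_mem_ne h l
  exact ⟨a, b, G.mem_lns.1 ha⟩

/-- weak key -/
lemma key_weak (hp : 0 < p) {f : P → ZMod p} (hf : f ∈ G.C) (l : L)
    (h : G.sec (supp f) l < p ^ 4 + 1) :
    G.sec (supp f) l * (p ^ 4 + 1 - G.sec (supp f) l) ≤ (supp f).card := by
  obtain ⟨R, h1, h2⟩ := G.exists_hole h
  obtain ⟨l', h3, h4⟩ := G.exists_other_line hp R l
  have := G.key' hf h1 h4 h3.symm (by simpa [mem_supp] using h2)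
  omega

lemma LL1 (hp : 1 < p) {f : P → ZMod p} (hf : f ∈ G.C) {x : P} (hx : f x ≠ 0) :
    ∃ l, G.I x l ∧ p ^ 2 + 1 ≤ G.sec (supp f) l := by
  by_contra hcon
  push Not at hcon
  obtain ⟨l, hl, hmax⟩ := exists_max_image (G.lns x) (fun l => G.sec (supp f) l)
    (by rw [← card_pos, card_lns]; omega)
  rw [mem_lns] at hl
  set k := G.sec (supp f) l with hk
  have hkq : k ≤ p ^ 2 := by have := hcon l hl; omega
  have hxs : x ∈ supp f := mem_supp.2 hx
  have h1 : (supp f).card + p ^ 4 ≤ (p ^ 4 + 1) * k := by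
    rw [← G.count_on hxs, ← G.card_lns x, ← smul_eq_mul]
    exact sum_le_card_nsmul _ _ _ hmax
  have hQ : p ^ 4 = p ^ 2 * p ^ 2 := by ring
  have hq : 1 < p ^ 2 := by nlinarith
  have hkQ : k < p ^ 4 + 1 := by nlinarith
  have h2 := G.key_weak (by omega) hf l hkQ
  rw [← hk] at h2
  set q := p ^ 2 with hqd
  rw [hQ] at h1 h2 hkQ
  have hk' : q * q ≤ k * k := by
    zify [hkQ.le] at h1 h2 ⊢; nlinarith
  have hkeq : k = q := by nlinarith
  -- there is a support point off l
  have hbig : k < (supp f).card := by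
    zify [hkQ.le] at h2 ⊢; rw [hkeq] at h2 ⊢
    nlinarith [mul_pos (by omega : (0:ℤ) < q) (by nlinarith : (0:ℤ) < (q:ℤ) * q - q)]
  obtain ⟨y, hy, hyl⟩ : ∃ y ∈ supp f, ¬ G.I y l := by
    by_contra hc
    push Not at hc
    have : (supp f).card ≤ k := by
      rw [hk, sec]; apply card_le_card
      intro z hz; simp [hz, hc z hz]
    omega
  obtain ⟨R, hR1, hR2⟩ := G.exists_hole (S := supp f) (l := l) (by rw [← hk, hQ]; exact hkQ)
  have hne : y ≠ R := fun h => hR2 (h ▸ hy)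
  obtain ⟨l', h3, h4⟩ := G.join y R hne
  have h5 : l ≠ l' := fun h => hyl (h ▸ h3)
  have h6 := G.key' hf hR1 h4 h5 (by simpa [mem_supp] using hR2)
  have h7 : 0 < G.sec (supp f) l' := card_pos.2 ⟨y, by simp [h3, hy]⟩
  rw [← hk, hkeq, hQ] at h6
  rw [hkeq] at h1
  have : q ≤ q * q + 1 := by nlinarith
  zify [this] at h1 h6 h7
  nlinarith

lemma LL2 (hp : 1 < p) {f : P → ZMod p} (hf : f ∈ G.C) {x : P} (hx : f x ≠ 0)
    (hw : (supp f).card + p ^ 2 < p ^ 6) :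
    ∃ l, G.I x l ∧ p ^ 4 + 1 ≤ G.sec (supp f) l + p ^ 2 := by
  obtain ⟨l, h1, h2⟩ := G.LL1 hp hf hx
  refine ⟨l, h1, ?_⟩
  by_contra hcon
  push Not at hcon
  have hk := G.key_weak (by omega) hf l (by omega)
  set k := G.sec (supp f) l
  have hQ : p ^ 4 = p ^ 2 * p ^ 2 := by ring
  have hQ6 : p ^ 6 = p ^ 2 * p ^ 2 * p ^ 2 := by ring
  rw [hQ] at hcon hk
  rw [hQ6] at hw
  set q := p ^ 2
  have : k ≤ q * q + 1 := by omega
  zify [this] at *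
  nlinarith [mul_nonneg (by linarith : (0:ℤ) ≤ k - (q + 1)) (by linarith : (0:ℤ) ≤ q * q - q - k)]

end PlaneCode

end PlanePart


section PlanePart2

open Finset Classical

namespace PlaneCode

variable {P L : Type} [Fintype P] [Fintype L] {p : ℕ} (G : PlaneCode P L p)

/-- indicator of a finset -/
noncomputable def ind (S : Finset P) : P → ZMod p := fun x => if x ∈ S then 1 else 0

lemma supp_ind (hp : p.Prime) (S : Finset P) : supp (ind S : P → ZMod p) = S := by
  have := Fact.mk hp
  ext x; simp [supp, ind]

lemma gap_plane (hp : p.Prime) (hp3 : 3 < p) {V : Finset P} (hc : ind V ∈ G.C) (l : L)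
    (hs : ∃ k, G.sec V l = 1 + k * p) (hw : V.card ≤ p ^ 6 + G.sec V l) :
    G.sec V l ≤ p ^ 2 + 1 ∨ p ^ 4 + 1 ≤ G.sec V l + p ^ 2 := by
  by_contra hcon
  push Not at hcon
  obtain ⟨h1, h2⟩ := hcon
  have hk := G.key_weak hp.pos hc l (by rw [supp_ind hp]; omega)
  rw [supp_ind hp] at hk
  obtain ⟨k, hk'⟩ := hs
  set s := G.sec V l
  have h3 : p + 1 ≤ k := by
    by_contra h; push Not at h
    have : k ≤ p := by omega
    have : k * p ≤ p * p := Nat.mul_le_mul_right p this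
    nlinarith
  have h4 : k + p + 1 ≤ p ^ 3 := by
    by_contra h; push Not at h
    have : p ^ 3 ≤ k + p := by omega
    have : p ^ 3 * p ≤ (k + p) * p := Nat.mul_le_mul_right p this
    nlinarith
  have h5 : p ^ 2 + 1 + p ≤ s := by rw [hk']; nlinarith
  have h6 : s + p ^ 2 + p ≤ p ^ 4 + 1 := by
    rw [hk']; nlinarith [Nat.mul_le_mul_right p h4]
  have hQ : p ^ 4 = p ^ 2 * p ^ 2 := by ring
  have hQ6 : p ^ 6 = p ^ 2 * p ^ 2 * p ^ 2 := by ring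
  have hpq : 4 * p + p ≤ p ^ 2 + p := by nlinarith
  rw [hQ] at hk h6 h2
  rw [hQ6] at hw
  set q := p ^ 2
  have : s ≤ q * q + 1 := by omega
  zify [this] at *
  have h7 := mul_nonneg (by linarith : (0:ℤ) ≤ s - (q + 1 + p)) (by linarith : (0:ℤ) ≤ q * q + 1 - q - p - s)
  -- s^2 <= s (Q+2) - (q+1+p)(Q+1-q-p)
  have h8 : (s:ℤ) * (q * q - s) ≥ (q+p+1) * (q * q + 1 - q - p) - 2 * s := by nlinarith
  have h9 : (s:ℤ) * (q * q - s) ≤ q * q * q := by nlinarith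
  have h10 : (q+p+1 : ℤ) * (q * q + 1 - q - p) - 2 * (q*q+1-q-p) > q * q * q := by nlinarith
  nlinarith

lemma card_points (G : PlaneCode P L p) (x : P) : Fintype.card P + p ^ 4 = (p ^ 4 + 1) ^ 2 := by
  have h := G.count_on (S := univ) (R := x) (by simp)
  have h2 : ∀ l, G.sec univ l = p ^ 4 + 1 := by
    intro l; rw [← G.card_pts l]; simp [sec, pts]
  simp_rw [h2] at h
  rw [sum_const, card_lns, smul_eq_mul] at h
  rw [← card_univ, ← h]; ring

lemma sum_inc (S : Finset P) (φ : L → ℕ) :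
    ∑ l, G.sec S l * φ l = ∑ x ∈ S, ∑ l ∈ G.lns x, φ l := by
  have h1 : ∀ l, G.sec S l = ∑ x ∈ S, if G.I x l then 1 else 0 := by
    intro l; rw [sec, ← card_filter]; congr 1; ext x; simp [and_comm]
  simp_rw [h1, sum_mul]
  rw [sum_comm]
  apply sum_congr rfl
  intro x _
  rw [lns, sum_filter]
  apply sum_congr rfl
  intro l _
  split_ifs <;> simp

lemma sum_sec_all (S : Finset P) : ∑ l, G.sec S l = S.card * (p ^ 4 + 1) := by
  have := G.sum_inc S (fun _ => 1)
  simp only [mul_one, sum_const, card_lns, smul_eq_mul] at this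
  exact this

lemma card_lines (G : PlaneCode P L p) : Fintype.card L = Fintype.card P := by
  have h := G.sum_sec_all univ
  have h2 : ∀ l, G.sec univ l = p ^ 4 + 1 := by
    intro l; rw [← G.card_pts l]; simp [sec, pts]
  simp_rw [h2] at h
  simp only [sum_const, smul_eq_mul, card_univ] at h
  exact Nat.eq_of_mul_eq_mul_right (by omega) h

lemma sum_sec_sq (S : Finset P) :
    ∑ l, G.sec S l * G.sec S l = S.card * (S.card + p ^ 4) := by
  rw [G.sum_inc S (fun l => G.sec S l)]
  rw [sum_congr rfl (fun x hx => G.count_on hx)]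
  simp

lemma noLong (hp : p.Prime) (hp3 : 3 < p) {V : Finset P} (hc : ind V ∈ G.C)
    (hs : ∀ l, ∃ k, G.sec V l = 1 + k * p) (hle : ∀ l, G.sec V l ≤ p ^ 2 + 1)
    (l : L) (h2 : 2 ≤ G.sec V l) (hq : G.sec V l ≤ p ^ 2) : False := by
  have hge : ∀ l, 1 ≤ G.sec V l := fun l => by obtain ⟨k, hk⟩ := hs l; omega
  obtain ⟨x, hx1, hx2⟩ := G.exists_mem (S := V) (l := l) (by omega)
  obtain ⟨l0, h3, h4⟩ := G.LL1 hp.one_lt hc (x := x) (by rw [← mem_supp, supp_ind hp]; exact hx2)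
  rw [supp_ind hp] at h4
  have h5 : G.sec V l0 = p ^ 2 + 1 := le_antisymm (hle l0) h4
  have hQ : p ^ 4 = p ^ 2 * p ^ 2 := by ring
  have hpq : 4 * p ≤ p ^ 2 := by nlinarith
  have hqq : 16 ≤ p ^ 2 := by nlinarith
  obtain ⟨R, hR1, hR2⟩ := G.exists_hole (S := V) (l := l0) (by rw [h5, hQ]; nlinarith)
  have hkey : ∀ l', G.I R l' → l' ≠ l0 → G.sec V l' + (p ^ 2 + 1) * (p ^ 4 - p ^ 2) ≤ V.card := by
    intro l' h1 h2
    have := G.key' hc hR1 h1 h2.symm (by simp [ind, hR2])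
    rw [supp_ind hp, h5] at this
    convert this using 3
    omega
  have hw : p ^ 6 + 1 ≤ V.card := by
    by_contra hcon
    have h6 : ∀ l' ∈ (G.lns R).erase l0, G.sec V l' ≤ p ^ 2 + 1 - p := by
      intro l' h1
      rw [mem_erase, mem_lns] at h1
      have h7 := hkey l' h1.2 h1.1
      obtain ⟨k, hk⟩ := hs l'
      have h8 : k < p := by
        by_contra hk2
        push Not at hk2
        have : p ^ 2 + 1 ≤ G.sec V l' := by rw [hk]; nlinarith
        have : (p ^ 2 + 1) * (p ^ 4 - p ^ 2) + p ^ 2 = p ^ 6 := by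
          have : p ^ 2 ≤ p ^ 4 := Nat.pow_le_pow_right hp.pos (by norm_num)
          zify [this]; ring
        omega
      have : k * p + p ≤ p ^ 2 := by nlinarith
      omega
    have h7 := sum_le_card_nsmul _ _ _ h6
    have h8 : ((G.lns R).erase l0).card = p ^ 4 := by
      rw [card_erase_of_mem (G.mem_lns.2 hR1), card_lns]; rfl
    have h9 : ∑ l ∈ (G.lns R).erase l0, G.sec V l + G.sec V l0 = V.card := by
      rw [← G.count_off hR2]; exact sum_erase_add _ _ (G.mem_lns.2 hR1)
    obtain ⟨l', h10, h11⟩ := G.exists_other_line hp.pos R l0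
    have h12 := hkey l' h11 h10
    have h13 := hge l'
    rw [h8, smul_eq_mul] at h7
    rw [h5] at h9
    have e1 : p ^ 2 ≤ p ^ 4 := Nat.pow_le_pow_right hp.pos (by norm_num)
    have e2 : p ≤ p ^ 2 + 1 := by omega
    rw [hQ] at h7 h12 e1
    set q := p ^ 2
    zify [e1, e2] at *
    nlinarith
  -- counting
  have hP := G.card_points x
  have hL := G.card_lines
  have s1 := G.sum_sec_all V
  have s2 := G.sum_sec_sq V
  have hpos : (0:ℤ) < ∑ l, ((G.sec V l : ℤ) - 1) * ((p:ℤ) ^ 2 + 1 - G.sec V l) := by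
    apply sum_pos'
    · intro i _
      have := hge i; have := hle i; zify at *
      exact mul_nonneg (by linarith) (by linarith)
    · refine ⟨l, mem_univ _, ?_⟩
      zify at *
      exact mul_pos (by linarith) (by linarith)
  have hexp : ∑ l, ((G.sec V l : ℤ) - 1) * ((p:ℤ) ^ 2 + 1 - G.sec V l)
      = ((p:ℤ) ^ 2 + 2) * ∑ l, (G.sec V l : ℤ) - ∑ l, (G.sec V l : ℤ) * G.sec V l
        - ((p:ℤ) ^ 2 + 1) * Fintype.card L := by
    rw [mul_sum, ← sum_sub_distrib]
    have : ((p:ℤ) ^ 2 + 1) * Fintype.card L = ∑ l : L, ((p:ℤ) ^ 2 + 1) := by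
      simp [card_univ]; ring
    rw [this, ← sum_sub_distrib]
    apply sum_congr rfl; intro i _; ring
  rw [hexp, hL] at hpos
  zify at s1 s2 hP hw hqq
  rw [s1, s2] at hpos
  have hP' : (Fintype.card P : ℤ) = ((p:ℤ)^4 + 1)^2 - p ^ 4 := by linarith
  rw [hP'] at hpos
  obtain ⟨e, he⟩ : ∃ e : ℤ, (V.card : ℤ) = p ^ 6 + 1 + e := ⟨V.card - p ^ 6 - 1, by ring⟩
  have he0 : 0 ≤ e := by linarith
  rw [he] at hpos
  have hid : ((p:ℤ) ^ 2 + 2) * ((p ^ 6 + 1 + e) * (p ^ 4 + 1)) - (p ^ 6 + 1 + e) * (p ^ 6 + 1 + e + p ^ 4)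
      - ((p:ℤ) ^ 2 + 1) * (((p:ℤ)^4 + 1)^2 - p ^ 4)
      = - (e * ((p:ℤ)^2*p^2*p^2 - p^2*p^2 - p^2 + e)) := by ring
  rw [hid] at hpos
  have : 0 ≤ e * ((p:ℤ)^2*p^2*p^2 - p^2*p^2 - p^2 + e) := by
    apply mul_nonneg he0
    set q := (p:ℤ)^2
    have : q * q ≥ 16 * q := by nlinarith
    have : q * q * q ≥ 16 * (q * q) := by nlinarith
    nlinarith
  linarith

end PlaneCode

end PlanePart2


section PlanePart3

open Finset Classical

namespace PlaneCode

variable {P L : Type} [Fintype P] [Fintype L] {p : ℕ} (G : PlaneCode P L p)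

lemma cov (M : Finset L) (l : L) (hl : l ∉ M) :
    ((G.pts l).filter (fun x => ∃ m ∈ M, G.I x m)).card ≤ M.card := by
  have h : (G.pts l).filter (fun x => ∃ m ∈ M, G.I x m)
      = M.biUnion (fun m => (G.pts l).filter (fun x => G.I x m)) := by
    ext x; simp only [mem_filter, mem_biUnion]
    constructor
    · rintro ⟨a, m, b, c⟩; exact ⟨m, b, a, c⟩
    · rintro ⟨m, b, a, c⟩; exact ⟨a, m, b, c⟩
  rw [h]
  refine (card_biUnion_le_card_mul _ _ 1 ?_).trans (by simp)
  intro m hm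
  rw [common_pts, if_neg]
  rintro rfl; exact hl hm

lemma union_bound_aux (V : Finset P) (M : Finset L) :
    2 * ∑ l ∈ M, G.sec V l ≤ 2 * (V.filter (fun x => ∃ m ∈ M, G.I x m)).card
      + M.card * (M.card - 1) := by
  induction M using Finset.induction_on with
  | empty => simp
  | insert l M hl ih =>
    rw [sum_insert hl, card_insert_of_notMem hl]
    have h1 : G.sec V l + (V.filter (fun x => ∃ m ∈ M, G.I x m)).card
        ≤ (V.filter (fun x => ∃ m ∈ insert l M, G.I x m)).card + M.card := by
      have e1 : G.sec V l = (V.filter (fun x => G.I x l)).card := by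
        rw [sec]; congr 1; ext x; simp [and_comm]
      have e2 : V.filter (fun x => ∃ m ∈ insert l M, G.I x m)
          = V.filter (fun x => G.I x l) ∪ V.filter (fun x => ∃ m ∈ M, G.I x m) := by
        ext x; simp only [mem_filter, mem_union, mem_insert]
        constructor
        · rintro ⟨a, m, rfl | b, c⟩
          · exact Or.inl ⟨a, c⟩
          · exact Or.inr ⟨a, m, b, c⟩
        · rintro (⟨a, b⟩ | ⟨a, m, b, c⟩)
          · exact ⟨a, l, Or.inl rfl, b⟩
          · exact ⟨a, m, Or.inr b, c⟩
      have e3 := card_union_add_card_inter (V.filter (fun x => G.I x l))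
        (V.filter (fun x => ∃ m ∈ M, G.I x m))
      have e4 : (V.filter (fun x => G.I x l) ∩ V.filter (fun x => ∃ m ∈ M, G.I x m)).card
          ≤ M.card := by
        refine le_trans (card_le_card ?_) (G.cov M l hl)
        intro x; simp only [mem_inter, mem_filter, mem_pts]
        tauto
      rw [e1, e2]; omega
    have h2 : (M.card + 1) * (M.card + 1 - 1) = M.card * (M.card - 1) + 2 * M.card := by
      cases h : M.card with
      | zero => simp
      | succ n => simp; ring
    omega

lemma union_bound (V : Finset P) (M : Finset L) :
    2 * ∑ l ∈ M, G.sec V l ≤ 2 * V.card + M.card * (M.card - 1) := by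
  have := G.union_bound_aux V M
  have h2 : (V.filter (fun x => ∃ m ∈ M, G.I x m)).card ≤ V.card := card_filter_le _ _
  omega

lemma union_bound' (V : Finset P) (M : Finset L) (s : ℕ) (h : ∀ l ∈ M, s ≤ G.sec V l) :
    2 * (M.card * s) ≤ 2 * V.card + M.card * (M.card - 1) := by
  have := G.union_bound V M
  have h2 : M.card * s ≤ ∑ l ∈ M, G.sec V l := by
    have := card_nsmul_le_sum M (fun l => G.sec V l) s h
    rwa [smul_eq_mul] at this
  omega

/-- long lines -/
noncomputable def longs (V : Finset P) : Finset L :=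
  univ.filter (fun l => p ^ 4 + 1 ≤ G.sec V l + p ^ 2)

lemma mem_longs {V : Finset P} {l : L} :
    l ∈ G.longs V ↔ p ^ 4 + 1 ≤ G.sec V l + p ^ 2 := by simp [longs]

lemma deg_pos {M : Finset L} {x : P} : 0 < G.deg M x ↔ ∃ m ∈ M, G.I x m := by
  rw [deg, card_pos]
  constructor
  · rintro ⟨m, hm⟩; rw [mem_filter] at hm; exact ⟨m, hm⟩
  · rintro ⟨m, hm⟩; exact ⟨m, mem_filter.2 hm⟩

lemma longs_card (hp3 : 3 < p) {V : Finset P} (hw : V.card ≤ (p ^ 2 + 1) * (p ^ 4 + 1)) :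
    (G.longs V).card ≤ p ^ 2 + 2 := by
  by_contra hcon
  obtain ⟨M, hM, hc⟩ := exists_subset_card_eq (show p ^ 2 + 3 ≤ (G.longs V).card by omega)
  have h := G.union_bound' V M (p ^ 4 + 1 - p ^ 2) (by
    intro l hl; have := G.mem_longs.1 (hM hl); omega)
  rw [hc] at h
  have hQ : p ^ 4 = p ^ 2 * p ^ 2 := by ring
  have hqq : 16 ≤ p ^ 2 := by nlinarith
  rw [hQ] at h hw
  set q := p ^ 2
  have e1 : q ≤ q * q + 1 := by nlinarith
  have e2 : 1 ≤ q + 3 := by omega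
  zify [e1, e2] at *
  nlinarith

lemma ind_pts_mem (l : L) : ind (G.pts l) ∈ G.C := by
  have := G.line_mem l
  convert this using 2
  simp [ind, pts]

lemma sum_ind_pts (M : Finset L) (x : P) :
    ∑ m ∈ M, (ind (G.pts m) : P → ZMod p) x = (G.deg M x : ZMod p) := by
  simp [ind, mem_pts, deg]

lemma cov_V (hp : p.Prime) (hp3 : 3 < p) {V : Finset P} (hc : ind V ∈ G.C)
    (hgap : ∀ l, G.sec V l ≤ p ^ 2 + 1 ∨ p ^ 4 + 1 ≤ G.sec V l + p ^ 2)
    (g : L) (hg : g ∈ G.longs V) (x : P) (hx : x ∈ V) : ∃ l ∈ G.longs V, G.I x l := by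
  by_contra hcon
  push Not at hcon
  have hQ : p ^ 4 = p ^ 2 * p ^ 2 := by ring
  have hQ6 : p ^ 6 = p ^ 2 * p ^ 2 * p ^ 2 := by ring
  have hqq : 16 ≤ p ^ 2 := by nlinarith
  have h1 : ∀ l ∈ G.lns x, G.sec V l ≤ p ^ 2 + 1 := by
    intro l hl
    rcases hgap l with h | h
    · exact h
    · exact absurd (G.mem_lns.1 hl) (hcon l (G.mem_longs.2 h))
  have h2 := sum_le_card_nsmul _ _ _ h1
  rw [G.count_on hx, card_lns, smul_eq_mul] at h2
  set f : P → ZMod p := ind V - ind (G.pts g) with hf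
  have hfC : f ∈ G.C := G.C.sub_mem hc (G.ind_pts_mem g)
  have hxg : ¬ G.I x g := hcon g hg
  have hfx : f x ≠ 0 := by
    have := Fact.mk hp
    simp [hf, ind, hx, mem_pts, hxg]
  have hsub : supp f ⊆ (V.filter (fun y => ¬ G.I y g)) ∪ ((G.pts g).filter (· ∉ V)) := by
    intro y hy
    rw [mem_supp] at hy
    simp only [mem_union, mem_filter, mem_pts]
    by_cases a : y ∈ V <;> by_cases b : G.I y g <;> simp_all [ind, mem_pts]
  have hw : (supp f).card + p ^ 2 < p ^ 6 := by
    have a1 := (card_le_card hsub).trans (card_union_le _ _)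
    have a2 := G.holes_eq V g
    have a3 : (V.filter (fun y => G.I y g)).card + (V.filter (fun y => ¬ G.I y g)).card = V.card :=
      card_filter_add_card_filter_not _
    have a4 : G.sec V g = (V.filter (fun x => G.I x g)).card := by
      rw [sec]; congr 1; ext x; simp [and_comm]
    have a5 := G.mem_longs.1 hg
    rw [hQ] at h2 a2 a5
    rw [hQ6]
    set q := p ^ 2
    nlinarith
  obtain ⟨l, hl1, hl2⟩ := G.LL2 hp.one_lt hfC hfx hw
  have hlg : g ≠ l := by rintro rfl; exact hxg hl1
  have b1 : G.sec (supp f) l ≤ G.sec V l + 1 := by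
    have : ((G.pts l).filter (fun x => G.I x g)).card = 1 := by
      rw [common_pts, if_neg hlg]
    rw [← this, sec_eq, sec_eq]
    refine le_trans (card_le_card ?_) (card_union_le _ _)
    intro y; simp only [mem_filter, mem_union]
    rintro ⟨a, b⟩
    have := hsub b
    simp only [mem_union, mem_filter, mem_pts] at this
    tauto
  have b2 := h1 l (G.mem_lns.2 hl1)
  rw [hQ] at hl2
  nlinarith

/-- points on `l` of degree at least two -/
lemma deg2_on (M : Finset L) (l : L) (hl : l ∈ M) :
    ((G.pts l).filter (fun x => 2 ≤ G.deg M x)).card + 1 ≤ M.card := by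
  have h1 := G.sum_deg_pts M l
  rw [if_pos hl] at h1
  have h2 : ∑ x ∈ G.pts l, (1 + if 2 ≤ G.deg M x then 1 else 0) ≤ ∑ x ∈ G.pts l, G.deg M x := by
    apply sum_le_sum
    intro x hx
    have : 0 < G.deg M x := G.deg_pos.2 ⟨l, hl, G.mem_pts.1 hx⟩
    split_ifs <;> omega
  rw [sum_add_distrib, ← card_filter] at h2
  simp only [sum_const, card_pts, smul_eq_mul, mul_one] at h2
  omega

lemma structure_deg (hp : p.Prime) (hp3 : 3 < p) {V : Finset P} (hc : ind V ∈ G.C)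
    (hgap : ∀ l, G.sec V l ≤ p ^ 2 + 1 ∨ p ^ 4 + 1 ≤ G.sec V l + p ^ 2)
    (hw : V.card ≤ (p ^ 2 + 1) * (p ^ 4 + 1))
    (g : L) (hg : g ∈ G.longs V) (x : P) :
    (ind V x : ZMod p) = (G.deg (G.longs V) x : ZMod p) := by
  set M := G.longs V with hM
  have hm := G.longs_card hp3 hw
  rw [← hM] at hm
  have := Fact.mk hp
  have hQ : p ^ 4 = p ^ 2 * p ^ 2 := by ring
  have hQ6 : p ^ 6 = p ^ 2 * p ^ 2 * p ^ 2 := by ring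
  have hqq : 16 ≤ p ^ 2 := by nlinarith
  by_contra hne
  set f : P → ZMod p := ind V - ∑ m ∈ M, ind (G.pts m) with hf
  have hfC : f ∈ G.C := G.C.sub_mem hc (G.C.sum_mem fun m _ => G.ind_pts_mem m)
  have hfv : ∀ y, f y = ind V y - (G.deg M y : ZMod p) := by
    intro y; rw [← G.sum_ind_pts]; simp [hf]
  have hfx : f x ≠ 0 := by rw [hfv]; exact sub_ne_zero.2 hne
  have hs1 : ∀ y ∈ supp f, 0 < G.deg M y := by
    intro y hy
    by_cases hyV : y ∈ V
    · exact G.deg_pos.2 (G.cov_V hp hp3 hc hgap g hg y hyV)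
    · rw [mem_supp, hfv] at hy
      rcases Nat.eq_zero_or_pos (G.deg M y) with h | h
      · simp [h, ind, hyV] at hy
      · exact h
  have hs2 : ∀ y ∈ supp f, y ∈ V → 2 ≤ G.deg M y := by
    intro y hy hyV
    have h1 := hs1 y hy
    rw [mem_supp, hfv] at hy
    by_contra h
    have : G.deg M y = 1 := by omega
    simp [this, ind, hyV] at hy
  have hl : ∀ l, G.sec (supp f) l ≤ 2 * p ^ 2 + 2 := by
    intro l
    by_cases hlM : l ∈ M
    · have h1 : G.sec (supp f) l ≤ ((G.pts l).filter (· ∉ V)).card +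
          ((G.pts l).filter (fun x => 2 ≤ G.deg M x)).card := by
        rw [sec_eq]
        refine le_trans (card_le_card ?_) (card_union_le _ _)
        intro y; simp only [mem_filter, mem_union]
        rintro ⟨a, b⟩
        by_cases c : y ∈ V
        · exact Or.inr ⟨a, hs2 y b c⟩
        · exact Or.inl ⟨a, c⟩
      have h2 := G.deg2_on M l hlM
      have h3 := G.holes_eq V l
      have h4 := G.mem_longs.1 hlM
      omega
    · have h1 : G.sec (supp f) l ≤ M.card := by
        refine le_trans (card_le_card ?_) (G.cov M l hlM)
        intro y; simp only [mem_filter, mem_pts, mem_univ, true_and]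
        rintro ⟨a, b⟩
        exact ⟨a, G.deg_pos.1 (hs1 y b)⟩
      omega
  have hw' : (supp f).card ≤ M.card * (2 * p ^ 2 + 2) := by
    have : supp f ⊆ M.biUnion (fun m => univ.filter (fun y => G.I y m ∧ y ∈ supp f)) := by
      intro y hy
      obtain ⟨m, h1, h2⟩ := G.deg_pos.1 (hs1 y hy)
      simp only [mem_biUnion, mem_filter, mem_univ, true_and]
      exact ⟨m, h1, h2, hy⟩
    exact (card_le_card this).trans (card_biUnion_le_card_mul _ _ _ (fun m _ => hl m))
  obtain ⟨l, _, hl2⟩ := G.LL2 hp.one_lt hfC hfx (by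
    rw [hQ6]; have : M.card * (2 * p ^ 2 + 2) ≤ (p^2+2) * (2 * p ^ 2 + 2) := Nat.mul_le_mul_right _ hm
    set q := p ^ 2
    have : q * q ≥ 16 * q := by nlinarith
    have : q * q * q ≥ 16 * (q * q) := by nlinarith
    nlinarith)
  have := hl l
  rw [hQ] at hl2
  nlinarith

lemma sum_ind_line (V : Finset P) (l : L) :
    ∑ x ∈ G.pts l, (ind V x : ZMod p) = (G.sec V l : ZMod p) := by
  rw [sec_eq, filter_mem_eq_inter]; simp [ind]

lemma structure_card (hp : p.Prime) (hp3 : 3 < p) {V : Finset P} (hc : ind V ∈ G.C)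
    (hs : ∀ l, ∃ k, G.sec V l = 1 + k * p)
    (hgap : ∀ l, G.sec V l ≤ p ^ 2 + 1 ∨ p ^ 4 + 1 ≤ G.sec V l + p ^ 2)
    (hw : V.card ≤ (p ^ 2 + 1) * (p ^ 4 + 1))
    (g : L) (hg : g ∈ G.longs V) :
    ∃ k, k ≤ p ∧ (G.longs V).card = 1 + k * p := by
  set M := G.longs V with hM
  have hm := G.longs_card hp3 hw
  rw [← hM] at hm
  have := Fact.mk hp
  have h1 := G.sum_ind_line V g
  rw [sum_congr rfl (fun x _ => G.structure_deg hp hp3 hc hgap hw g hg x), ← Nat.cast_sum,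
    G.sum_deg_pts, if_pos hg] at h1
  obtain ⟨k, hk⟩ := hs g
  rw [hk] at h1
  have h2 : ((M.card : ℕ) : ZMod p) = ((1 : ℕ) : ZMod p) := by
    push_cast at h1 ⊢
    simpa [hM] using h1
  have h3 := (ZMod.natCast_eq_natCast_iff' _ _ _).1 h2
  rw [Nat.mod_eq_of_lt hp.one_lt] at h3
  refine ⟨M.card / p, ?_, ?_⟩
  · have h4 := Nat.div_add_mod M.card p
    by_contra hcon
    push Not at hcon
    have : p * (p + 1) ≤ p * (M.card / p) := Nat.mul_le_mul_left _ hcon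
    nlinarith
  · have h4 := Nat.div_add_mod M.card p
    rw [h3] at h4
    nlinarith

end PlaneCode

end PlanePart3


section PlanePart4

open Finset Classical

namespace PlaneCode

variable {P L : Type} [Fintype P] [Fintype L] {p : ℕ} (G : PlaneCode P L p)

lemma sum_sec_M (S : Finset P) (M : Finset L) :
    ∑ l ∈ M, G.sec S l = ∑ x ∈ S, G.deg M x := by
  have h1 : ∀ l, G.sec S l = ∑ x ∈ S, if G.I x l then 1 else 0 := by
    intro l; rw [sec, ← card_filter]; congr 1; ext x; simp [and_comm]
  have h2 : ∀ x, G.deg M x = ∑ m ∈ M, if G.I x m then 1 else 0 := by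
    intro x; rw [deg, ← card_filter]
  simp_rw [h1, h2]
  rw [sum_comm]

lemma sec_univ (l : L) : G.sec univ l = p ^ 4 + 1 := by
  rw [← G.card_pts l]; simp [sec, pts]

lemma deg_mod (hp : p.Prime) {V : Finset P} {M : Finset L}
    (hdeg : ∀ x, (ind V x : ZMod p) = (G.deg M x : ZMod p)) (x : P) :
    G.deg M x % p = if x ∈ V then 1 else 0 := by
  have h := hdeg x
  have h2 : ((if x ∈ V then 1 else 0 : ℕ) : ZMod p) = (G.deg M x : ZMod p) := by
    rw [← h]; simp [ind]
  have h3 := (ZMod.natCast_eq_natCast_iff' _ _ _).1 h2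
  rw [← h3]; split_ifs
  · exact Nat.mod_eq_of_lt hp.one_lt
  · simp

lemma deg_le_n2 (M : Finset L) (X : P) (l : L) (hl : l ∈ M) (hX : ¬ G.I X l) :
    G.deg M X ≤ ((G.pts l).filter (fun y => 2 ≤ G.deg M y ∧ ∃ m ∈ M, G.I X m ∧ G.I y m)).card := by
  have h : ∀ m ∈ M.filter (fun m => G.I X m), ∃ y, G.I y l ∧ G.I y m := by
    intro m hm
    rw [mem_filter] at hm
    apply G.meet
    rintro rfl; exact hX hm.2
  have : Nonempty P := ⟨X⟩
  choose! φ h1 h2 using h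
  rw [deg]
  apply card_le_card_of_injOn φ
  · intro m hm
    have hm' := mem_filter.1 (mem_coe.1 hm)
    simp only [coe_filter, Set.mem_ofPred_eq, mem_pts]
    refine ⟨h1 m hm, ?_, m, hm'.1, hm'.2, h2 m hm⟩
    rw [deg]
    apply one_lt_card.2
    refine ⟨l, ?_, m, ?_, ?_⟩
    · simp [hl, h1 m hm]
    · simp [hm'.1, h2 m hm]
    · rintro rfl; exact hX hm'.2
  · intro m hm m' hm' he
    have a := mem_filter.1 (mem_coe.1 hm)
    have a' := mem_filter.1 (mem_coe.1 hm')
    refine G.uniq X (φ m) m m' a.2 (h2 m hm) a'.2 (he ▸ h2 m' hm') ?_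
    intro hh; exact hX (hh ▸ h1 m hm)

lemma classify (hp : p.Prime) (hp3 : 3 < p) {V : Finset P} {M : Finset L}
    (hdeg : ∀ x, (ind V x : ZMod p) = (G.deg M x : ZMod p)) {k : ℕ} (hkp : k ≤ p)
    (hM : M.card = 1 + k * p) (hnc : ∀ X, ∃ l ∈ M, ¬ G.I X l) :
    V.card + p ^ 3 + p ^ 2 = (p ^ 2 + 1) * (p ^ 4 + 1) ∧ ∃ l, G.sec V l + p = p ^ 2 + 1 := by
  have hmod := G.deg_mod hp hdeg
  have hp0 := hp.pos
  have hd2 : ∀ x, 2 ≤ G.deg M x → p ≤ G.deg M x := by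
    intro x hx
    by_contra hcon
    have := hmod x
    rw [Nat.mod_eq_of_lt (by omega)] at this
    split_ifs at this <;> omega
  have hn2 : ∀ l ∈ M, ((G.pts l).filter (fun x => 2 ≤ G.deg M x)).card * (p - 1) ≤ k * p := by
    intro l hl
    have h1 := G.sum_deg_pts M l
    rw [if_pos hl] at h1
    have h2 : ∑ x ∈ G.pts l, (1 + (if 2 ≤ G.deg M x then 1 else 0) * (p - 1))
        ≤ ∑ x ∈ G.pts l, G.deg M x := by
      apply sum_le_sum
      intro x hx
      have : 0 < G.deg M x := G.deg_pos.2 ⟨l, hl, G.mem_pts.1 hx⟩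
      split_ifs with h
      · have := hd2 x h; omega
      · omega
    rw [sum_add_distrib, ← sum_mul, ← card_filter] at h2
    simp only [sum_const, card_pts, smul_eq_mul, mul_one] at h2
    omega
  have hle2 : ∀ X, ∀ l ∈ M, ¬ G.I X l →
      G.deg M X ≤ ((G.pts l).filter (fun x => 2 ≤ G.deg M x)).card := by
    intro X l hl hX
    refine (G.deg_le_n2 M X l hl hX).trans (card_le_card ?_)
    intro y; simp only [mem_filter]; tauto
  have hdle : ∀ X, G.deg M X ≤ p + 1 := by
    intro X
    obtain ⟨l, hl, hX⟩ := hnc X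
    have h1 := hle2 X l hl hX
    have h2 := hn2 l hl
    by_contra hcon
    have h3 : (p + 2) * (p - 1) ≤ k * p := le_trans (Nat.mul_le_mul_right _ (by omega)) h2
    have h4 : k * p ≤ p * p := Nat.mul_le_mul_right _ hkp
    zify [hp0] at *
    nlinarith
  have hdeg4 : ∀ X, (G.deg M X = 0 ∧ X ∉ V) ∨ (G.deg M X = 1 ∧ X ∈ V) ∨
      (G.deg M X = p ∧ X ∉ V) ∨ (G.deg M X = p + 1 ∧ X ∈ V) := by
    intro X
    have h1 := hdle X
    have h2 := hmod X
    have h3 := Nat.div_add_mod (G.deg M X) p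
    have h4 : G.deg M X / p ≤ 1 := by
      by_contra hc
      have : p * 2 ≤ p * (G.deg M X / p) := Nat.mul_le_mul_left _ (by omega)
      omega
    rw [h2] at h3
    generalize G.deg M X / p = d at *
    have h5 : d = 0 ∨ d = 1 := by omega
    split_ifs at h3 with h <;> rcases h5 with rfl | rfl <;> simp [h] <;> omega
  set A : Finset P := univ.filter (fun x => G.deg M x = p) with hA
  set B : Finset P := univ.filter (fun x => G.deg M x = p + 1) with hB
  have hmA : ∀ x, x ∈ A ↔ G.deg M x = p := by intro x; simp [hA]
  have hmB : ∀ x, x ∈ B ↔ G.deg M x = p + 1 := by intro x; simp [hB]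
  have hsecsum : ∀ (S : Finset P) l, G.sec S l = ∑ x ∈ G.pts l, if x ∈ S then 1 else 0 := by
    intro S l; rw [sec_eq, card_filter]
  have hD6 : ∀ l ∈ M, G.sec A l * (p - 1) + G.sec B l * p = k * p := by
    intro l hl
    have h1 := G.sum_deg_pts M l
    rw [if_pos hl] at h1
    have h2 : ∑ x ∈ G.pts l, G.deg M x = ∑ x ∈ G.pts l,
        (1 + (if x ∈ A then 1 else 0) * (p - 1) + (if x ∈ B then 1 else 0) * p) := by
      apply sum_congr rfl
      intro x hx
      have h0 : 0 < G.deg M x := G.deg_pos.2 ⟨l, hl, G.mem_pts.1 hx⟩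
      simp only [hmA, hmB]
      rcases hdeg4 x with ⟨h, _⟩ | ⟨h, _⟩ | ⟨h, _⟩ | ⟨h, _⟩ <;> rw [h] at h0 ⊢ <;> split_ifs <;> omega
    rw [sum_add_distrib, sum_add_distrib, ← sum_mul, ← sum_mul, ← hsecsum, ← hsecsum] at h2
    simp only [sum_const, card_pts, smul_eq_mul, mul_one] at h2
    omega
  have hn2eq : ∀ l, ((G.pts l).filter (fun x => 2 ≤ G.deg M x)).card = G.sec A l + G.sec B l := by
    intro l
    rw [hsecsum, hsecsum, ← sum_add_distrib, card_filter]
    apply sum_congr rfl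
    intro x hx
    simp only [hmA, hmB]
    rcases hdeg4 x with h | h | h | h <;> rw [h.1] at * <;> split_ifs <;> omega
  have hD8 : ∀ l ∈ M, (G.sec A l = 0 ∧ G.sec B l = k) ∨ (G.sec A l = p ∧ G.sec B l + p = k + 1) := by
    intro l hl
    have h := hD6 l hl
    generalize G.sec A l = a at *
    generalize G.sec B l = b at *
    have h1 : p ∣ a * (p - 1) := by
      have : p ∣ a * (p - 1) + b * p := by rw [h]; exact dvd_mul_left _ _
      exact (Nat.dvd_add_left (dvd_mul_left _ _)).1 this
    have h2 : p ∣ a := by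
      rcases hp.dvd_mul.1 h1 with h | h
      · exact h
      · exact absurd (Nat.le_of_dvd (by omega) h) (by omega)
    obtain ⟨a', rfl⟩ := h2
    have h3 : a' * (p - 1) + b = k := by
      apply Nat.eq_of_mul_eq_mul_right hp0
      rw [← h]; ring
    have h4 : a' < 2 := by
      by_contra hc
      have : 2 * (p - 1) ≤ a' * (p - 1) := Nat.mul_le_mul_right _ (by omega)
      omega
    interval_cases a'
    · left; simpa using h3
    · right; simp; omega
  -- existence of a point of degree at least two
  obtain ⟨l0, hl0⟩ : M.Nonempty := by rw [← card_pos]; omega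
  obtain ⟨x0, hx0⟩ : (G.pts l0).Nonempty := by rw [← card_pos, card_pts]; omega
  obtain ⟨m0, hm0, hxm⟩ := hnc x0
  have hne0 : l0 ≠ m0 := by rintro rfl; exact hxm (G.mem_pts.1 hx0)
  obtain ⟨X, hX1, hX2⟩ := G.meet l0 m0 hne0
  have hdeg2 : ∀ l ∈ M, ∀ m ∈ M, l ≠ m → ∀ x, G.I x l → G.I x m → 2 ≤ G.deg M x := by
    intro l hl m hm hne x h1 h2
    rw [deg]
    apply one_lt_card.2
    exact ⟨l, by simp [hl, h1], m, by simp [hm, h2], hne⟩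
  have hX3 := hd2 X (hdeg2 l0 hl0 m0 hm0 hne0 X hX1 hX2)
  obtain ⟨l1, hl1, hXl1⟩ := hnc X
  have hk1 : k + 1 = p ∨ k = p := by
    have h1 := hle2 X l1 hl1 hXl1
    rw [hn2eq] at h1
    rcases hD8 l1 hl1 with h | h <;> omega
  rcases hk1 with hk | hk
  · -- k = p - 1
    exfalso
    have hnoB : ∀ x, G.deg M x ≠ p + 1 := by
      intro x hx
      obtain ⟨l, hl, hxl⟩ := hnc x
      have h1 := hle2 x l hl hxl
      rw [hn2eq] at h1
      rcases hD8 l hl with h | h <;> omega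
    have hB0 : ∀ l, G.sec B l = 0 := by
      intro l; rw [sec_eq, card_eq_zero]
      ext x; simp [hmB, hnoB]
    have hAp : ∀ l ∈ M, G.sec A l = p := by
      intro l hl
      have := hB0 l
      rcases hD8 l hl with h | h <;> omega
    refine G.noPP A M ?_ ?_ hAp ?_
    · intro x hx y hy hxy
      rw [hmA] at hx hy
      obtain ⟨l, hl, hlx⟩ : ∃ l ∈ M.filter (fun l => G.I y l), ¬ G.I x l := by
        have : 1 < (M.filter (fun l => G.I y l)).card := by
          change 1 < G.deg M y; omega
        obtain ⟨u, hu, v, hv, huv⟩ := one_lt_card.1 this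
        by_cases h : G.I x u
        · refine ⟨v, hv, fun h' => huv ?_⟩
          exact G.uniq x y u v h (mem_filter.1 hu).2 h' (mem_filter.1 hv).2 hxy
        · exact ⟨u, hu, h⟩
      obtain ⟨hlM, hyl⟩ := mem_filter.1 hl
      have h1 := G.deg_le_n2 M x l hlM hlx
      have h2 : ((G.pts l).filter (fun z => 2 ≤ G.deg M z ∧ ∃ m ∈ M, G.I x m ∧ G.I z m))
          = (G.pts l).filter (fun z => 2 ≤ G.deg M z) := by
        apply eq_of_subset_of_card_le
        · intro z; simp only [mem_filter]; tauto
        · rw [hn2eq, hAp l hlM, hB0]; omega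
      have h3 : y ∈ (G.pts l).filter (fun z => 2 ≤ G.deg M z) := by
        simp only [mem_filter, mem_pts]; exact ⟨hyl, by omega⟩
      rw [← h2, mem_filter] at h3
      obtain ⟨_, _, m, a, b, c⟩ := h3
      exact ⟨m, a, b, c⟩
    · intro l hl m hm hne
      obtain ⟨x, h1, h2⟩ := G.meet l m hne
      refine ⟨x, ?_, h1, h2⟩
      rw [hmA]
      have := hd2 x (hdeg2 l hl m hm hne x h1 h2)
      have := hdle x
      have := hnoB x
      omega
    · refine ⟨X, ?_, l0, hl0, m0, hm0, l1, hl1, hne0, hX1, hX2, hXl1⟩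
      rw [hmA]
      have := hdle X
      have := hnoB X
      omega
  · subst hk
    -- M.card = p^2+1
    have hsA : ∑ l ∈ M, G.sec A l = A.card * k := by
      rw [sum_sec_M, sum_congr rfl (fun x hx => (hmA x).1 hx), sum_const, smul_eq_mul]
    have hsB : ∑ l ∈ M, G.sec B l = B.card * (k + 1) := by
      rw [sum_sec_M, sum_congr rfl (fun x hx => (hmB x).1 hx), sum_const, smul_eq_mul]
    obtain ⟨g, hg, hgA⟩ : ∃ g ∈ M, G.sec A g = 0 := by
      by_contra hcon
      push Not at hcon
      have h1 : ∀ l ∈ M, G.sec B l = 1 := by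
        intro l hl
        rcases hD8 l hl with h | h
        · exact absurd h.1 (hcon l hl)
        · omega
      rw [sum_congr rfl h1, sum_const, smul_eq_mul, hM] at hsB
      have h2 : k + 1 ∣ 2 := by
        have : (k + 1) * (k - 1) + 2 = B.card * (k + 1) := by
          rw [← hsB]; zify [hp0]; ring
        have h3 : k + 1 ∣ (k + 1) * (k - 1) + 2 := by rw [this]; exact dvd_mul_left _ _
        exact (Nat.dvd_add_right (dvd_mul_right _ _)).1 h3
      exact absurd (Nat.le_of_dvd (by omega) h2) (by omega)
    have hgB : G.sec B g = k := by rcases hD8 g hg with h | h <;> omega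
    have hBon : ∀ l ∈ M, G.sec A l = 0 → ∀ x ∈ B, G.I x l := by
      intro l hl h0 x hx
      by_contra hxl
      have h1 := hle2 x l hl hxl
      rw [hn2eq, h0, (hmB x).1 hx] at h1
      rcases hD8 l hl with h | h <;> omega
    have hBc : B.card = k := by
      rw [← hgB, sec]
      congr 1; ext x; simp only [mem_filter, mem_univ, true_and]
      exact ⟨fun h => ⟨hBon g hg hgA x h, h⟩, fun h => h.2⟩
    have huniq : ∀ l ∈ M, l ≠ g → G.sec A l = k := by
      intro l hl hlg
      rcases hD8 l hl with h | h
      · exfalso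
        apply hlg
        obtain ⟨u, hu, v, hv, huv⟩ := one_lt_card.1 (show 1 < B.card by omega)
        exact G.uniq u v l g (hBon l hl h.1 u hu) (hBon l hl h.1 v hv)
          (hBon g hg hgA u hu) (hBon g hg hgA v hv) huv
      · exact h.1
    have hAc : A.card = k * k := by
      rw [← sum_erase_add _ _ hg, hgA, sum_congr rfl (fun l hl => huniq l (mem_of_mem_erase hl)
        (ne_of_mem_erase hl)), sum_const, card_erase_of_mem hg, hM, smul_eq_mul] at hsA
      apply Nat.eq_of_mul_eq_mul_right hp0
      rw [← hsA]; simp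
    have hpt : ∀ x, G.deg M x = (if x ∈ V then 1 else 0) + (if x ∈ A then 1 else 0) * k
        + (if x ∈ B then 1 else 0) * k := by
      intro x
      simp only [hmA, hmB]
      rcases hdeg4 x with ⟨h, h'⟩ | ⟨h, h'⟩ | ⟨h, h'⟩ | ⟨h, h'⟩ <;>
        simp only [h, h', if_true, if_false] <;> (try split_ifs) <;> first | omega | contradiction
    constructor
    · have h1 := G.sum_sec_M univ M
      simp only [sec_univ, sum_const, smul_eq_mul] at h1
      rw [sum_congr rfl (fun x _ => hpt x), sum_add_distrib, sum_add_distrib, ← sum_mul, ← sum_mul,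
        ← card_filter, ← card_filter, ← card_filter] at h1
      simp only [filter_mem_eq_inter, univ_inter] at h1
      rw [hAc, hBc, hM] at h1
      nlinarith
    · obtain ⟨x, hx⟩ : A.Nonempty := by
        rw [← card_pos, hAc]; positivity
      set Z := (A ∪ B).erase x with hZ
      have hZc : Z.card ≤ k * k + k := by
        refine (card_le_card (erase_subset _ _)).trans ((card_union_le _ _).trans ?_)
        omega
      have hxZ : x ∉ Z := by simp [hZ]
      have hcount := G.count_off hxZ
      -- find line
      obtain ⟨l, hl, hlM, hlZ⟩ : ∃ l ∈ G.lns x, l ∉ M ∧ G.sec Z l = 0 := by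
        by_contra hcon
        push Not at hcon
        have h1 : ∑ l ∈ G.lns x, 1 ≤ ∑ l ∈ G.lns x, ((if l ∈ M then 1 else 0) + G.sec Z l) := by
          apply sum_le_sum
          intro l hl
          by_cases h : l ∈ M
          · simp [h]
          · have := hcon l hl h; omega
        rw [sum_add_distrib, hcount, ← card_filter] at h1
        have h2 : ((G.lns x).filter (· ∈ M)).card = G.deg M x := by
          rw [deg]; congr 1; ext l; simp [mem_lns, and_comm]
        rw [h2, (hmA x).1 hx] at h1
        simp only [sum_const, card_lns, smul_eq_mul, mul_one] at h1
        have : k ^ 4 = k * k * (k * k) := by ring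
        have : 4 * k ≤ k * k := by nlinarith
        nlinarith
      refine ⟨l, ?_⟩
      have hxl := G.mem_lns.1 hl
      have hnoz : ∀ y ∈ G.pts l, y ∉ Z := by
        intro y hy hyZ
        have : 0 < G.sec Z l := by
          rw [sec_eq, card_pos]; exact ⟨y, by simp [hy, hyZ]⟩
        omega
      have hsAl : G.sec A l = 1 := by
        rw [sec_eq, card_eq_one]; refine ⟨x, ?_⟩
        ext y; simp only [mem_filter, mem_singleton]
        constructor
        · rintro ⟨a, b⟩
          by_contra hne
          exact hnoz y a (by simp [hZ, hne, b])
        · rintro rfl; exact ⟨G.mem_pts.2 hxl, hx⟩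
      have hsBl : G.sec B l = 0 := by
        rw [sec_eq, card_eq_zero]
        ext y; simp only [mem_filter]
        constructor
        · rintro ⟨a, b⟩
          exfalso
          have hne : y ≠ x := by
            rintro rfl
            have := (hmA y).1 hx; have := (hmB y).1 b; omega
          exact hnoz y a (by simp [hZ, hne, b])
        · intro h; simp at h
      have h1 := G.sum_deg_pts M l
      rw [if_neg hlM, sum_congr rfl (fun x _ => hpt x), sum_add_distrib, sum_add_distrib, ← sum_mul,
        ← sum_mul, ← hsecsum, ← hsecsum, ← hsecsum, hsAl, hsBl, hM] at h1
      nlinarith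

lemma T2 (hp : p.Prime) (hp3 : 3 < p) {V : Finset P} (hc : ind V ∈ G.C)
    (hs : ∀ l, ∃ k, G.sec V l = 1 + k * p)
    (hgap : ∀ l, G.sec V l ≤ p ^ 2 + 1 ∨ p ^ 4 + 1 ≤ G.sec V l + p ^ 2)
    (g : L) (hg : p ^ 4 + 1 ≤ G.sec V g + p ^ 2) (hw : V.card ≤ p ^ 6 + G.sec V g) :
    G.sec V g = p ^ 4 + 1 ∨ (G.sec V g + p = p ^ 4 + 1 ∧ ∃ l, G.sec V l + p = p ^ 2 + 1) := by
  have hw' : V.card ≤ (p ^ 2 + 1) * (p ^ 4 + 1) := by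
    have := G.sec_le V g
    nlinarith
  have hgM := G.mem_longs.2 hg
  have hdeg := G.structure_deg hp hp3 hc hgap hw' g hgM
  obtain ⟨k, hk1, hk2⟩ := G.structure_card hp hp3 hc hs hgap hw' g hgM
  set M := G.longs V
  have hmod := G.deg_mod hp hdeg
  have hp0 := hp.pos
  have hholes := G.holes_eq V g
  have hhole : ∀ x ∈ (G.pts g).filter (· ∉ V), p ≤ G.deg M x := by
    intro x hx
    rw [mem_filter, mem_pts] at hx
    have h0 : 0 < G.deg M x := G.deg_pos.2 ⟨g, hgM, hx.1⟩
    have := hmod x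
    rw [if_neg hx.2] at this
    exact Nat.le_of_dvd h0 (Nat.dvd_of_mod_eq_zero this)
  set t := ((G.pts g).filter (· ∉ V)).card with ht
  have h1 : t * (p - 1) ≤ k * p := by
    have h1 := G.sum_deg_pts M g
    rw [if_pos hgM] at h1
    have h2 : ∑ x ∈ G.pts g, (1 + (if x ∈ (G.pts g).filter (· ∉ V) then 1 else 0) * (p - 1))
        ≤ ∑ x ∈ G.pts g, G.deg M x := by
      apply sum_le_sum
      intro x hx
      have : 0 < G.deg M x := G.deg_pos.2 ⟨g, hgM, G.mem_pts.1 hx⟩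
      split_ifs with h
      · have := hhole x h; omega
      · omega
    rw [sum_add_distrib, ← sum_mul, ← card_filter, filter_mem_eq_inter,
      inter_eq_right.2 (filter_subset _ _), ← ht] at h2
    simp only [sum_const, card_pts, smul_eq_mul, mul_one] at h2
    omega
  have h2 : t ≤ p + 1 := by
    by_contra hcon
    have h3 : (p + 2) * (p - 1) ≤ k * p := le_trans (Nat.mul_le_mul_right _ (by omega)) h1
    have h4 : k * p ≤ p * p := Nat.mul_le_mul_right _ hk1
    zify [hp0] at *
    nlinarith
  have h3 : p ∣ t := by
    obtain ⟨j, hj⟩ := hs g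
    have : t + j * p = p * p ^ 3 := by
      have : p ^ 4 = p * p ^ 3 := by ring
      omega
    have h : p ∣ t + j * p := by rw [this]; exact dvd_mul_right _ _
    exact (Nat.dvd_add_left (dvd_mul_left _ _)).1 h
  obtain ⟨j, hj⟩ := h3
  have hj2 : j < 2 := by
    by_contra hc
    have : p * 2 ≤ p * j := Nat.mul_le_mul_left _ (by omega)
    omega
  interval_cases j
  · left; omega
  · right
    refine ⟨by omega, ?_⟩
    refine (G.classify hp hp3 hdeg hk1 hk2 ?_).2
    intro X
    by_contra hcon
    push Not at hcon
    obtain ⟨y, hy, hyX⟩ := exists_mem_ne (show 1 < ((G.pts g).filter (· ∉ V)).card by omega) X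
    have hd := hhole y hy
    obtain ⟨m, hm, hmg⟩ := exists_mem_ne (show 1 < (M.filter (fun l => G.I y l)).card by
      change 1 < G.deg M y; omega) g
    rw [mem_filter] at hm
    rw [mem_filter, mem_pts] at hy
    exact hmg (G.uniq y X m g hm.2 (hcon m hm.1) hy.1 (hcon g hgM) hyX)

lemma concurrent (hp : p.Prime) {V : Finset P} {M : Finset L}
    (hdeg : ∀ x, (ind V x : ZMod p) = (G.deg M x : ZMod p)) {k : ℕ}
    (hM : M.card = 1 + k * p) (X : P) (hX : ∀ l ∈ M, G.I X l) (l : L) (hl : l ∉ M)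
    (hs2 : 2 ≤ G.sec V l) : V.card = 1 + G.sec V l * p ^ 4 := by
  have hmod := G.deg_mod hp hdeg
  have hdX : G.deg M X = 1 + k * p := by
    rw [deg, ← hM]; congr 1; exact filter_true_of_mem hX
  have hXV : X ∈ V := by
    have := hmod X
    rw [hdX] at this
    simp only [Nat.add_mul_mod_self_right, Nat.mod_eq_of_lt hp.one_lt] at this
    by_contra h
    rw [if_neg h] at this; omega
  have hd1 : ∀ x, x ≠ X → G.deg M x = if x ∈ V then 1 else 0 := by
    intro x hx
    have h1 : G.deg M x ≤ 1 := by
      rw [deg, card_le_one]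
      intro a ha b hb
      rw [mem_filter] at ha hb
      exact G.uniq x X a b ha.2 (hX a ha.1) hb.2 (hX b hb.1) hx
    have := hmod x
    rwa [Nat.mod_eq_of_lt (by have := hp.one_lt; omega)] at this
  by_cases hXl : G.I X l
  · exfalso
    obtain ⟨y, hy, hyX⟩ := exists_mem_ne (show 1 < (univ.filter (fun x => G.I x l ∧ x ∈ V)).card from
      hs2) X
    simp only [mem_filter, mem_univ, true_and] at hy
    have h1 := hd1 y hyX
    rw [if_pos hy.2] at h1
    obtain ⟨m, hm, hym⟩ := G.deg_pos.1 (show 0 < G.deg M y by omega)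
    have : m = l := G.uniq y X m l hym (hX m hm) hy.1 hXl hyX
    exact hl (this ▸ hm)
  · have h1 := G.sum_deg_pts M l
    rw [if_neg hl] at h1
    have h2 : ∑ x ∈ G.pts l, G.deg M x = G.sec V l := by
      rw [sec_eq, card_filter]
      apply sum_congr rfl
      intro x hx
      apply hd1
      rintro rfl; exact hXl (G.mem_pts.1 hx)
    have h3 := G.sum_sec_M univ M
    simp only [sec_univ, sum_const, smul_eq_mul] at h3
    have h4 : ∑ x, G.deg M x = ∑ x, ((if x ∈ V then 1 else 0) + if x = X then k * p else 0) := by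
      apply sum_congr rfl
      intro x _
      by_cases h : x = X
      · subst h; simp [hdX, hXV]
      · simp [h, hd1 x h]
    rw [h4, sum_add_distrib, ← card_filter] at h3
    simp only [filter_mem_eq_inter, univ_inter, sum_ite_eq', mem_univ, if_true] at h3
    rw [h2] at h1
    rw [h1, hM]
    rw [hM] at h3
    nlinarith

end PlaneCode

end PlanePart4


section PlanePart5

open Finset Classical

namespace PlaneCode

variable {P L : Type} [Fintype P] [Fintype L] {p : ℕ} (G : PlaneCode P L p)

lemma pencil_inj (N : Finset L) (X : P) (hN : ∀ h ∈ N, G.I X h) (u : L) (hu : ¬ G.I X u) :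
    N.card ≤ ((G.pts u).filter (fun x => ∃ h ∈ N, G.I x h)).card := by
  have h : ∀ m ∈ N, ∃ y, G.I y u ∧ G.I y m := by
    intro m hm
    apply G.meet
    rintro rfl; exact hu (hN _ hm)
  have : Nonempty P := ⟨X⟩
  choose! φ h1 h2 using h
  apply card_le_card_of_injOn φ
  · intro m hm
    simp only [coe_filter, Set.mem_ofPred_eq, mem_pts]
    exact ⟨h1 m hm, m, hm, h2 m hm⟩
  · intro m hm m' hm' he
    refine G.uniq X (φ m) m m' (hN m hm) (h2 m hm) (hN m' hm') (he ▸ h2 m' hm') ?_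
    intro hh; exact hu (hh ▸ h1 m hm)

/-- lines with at most `p` holes, through a point -/
noncomputable def lng (V : Finset P) (x : P) : Finset L :=
  (G.lns x).filter (fun l => p ^ 4 + 1 ≤ G.sec V l + p)

noncomputable def sht (V : Finset P) (x : P) : Finset L :=
  (G.lns x).filter (fun l => ¬ p ^ 4 + 1 ≤ G.sec V l + p)

lemma mem_lng {V : Finset P} {x : P} {l : L} :
    l ∈ G.lng V x ↔ G.I x l ∧ p ^ 4 + 1 ≤ G.sec V l + p := by simp [lng, mem_lns]
lemma mem_sht {V : Finset P} {x : P} {l : L} :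
    l ∈ G.sht V x ↔ G.I x l ∧ ¬ p ^ 4 + 1 ≤ G.sec V l + p := by simp [sht, mem_lns]

lemma T3b_c (hp3 : 3 < p) {V : Finset P}
    (hgap : ∀ l, G.sec V l ≤ p ^ 2 + 1 ∨ p ^ 4 + 1 ≤ G.sec V l + p)
    (l : L) (X Y : P) (hXl : G.I X l) (hYl : G.I Y l) (hXY : X ≠ Y) (hY : Y ∈ V)
    (hn : 2 * p ^ 2 + 2 ≤ (G.lng V X).card) : ((G.sht V Y).erase l).card ≤ 2 * p := by
  set U := (G.sht V Y).erase l with hU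
  set N := G.lng V X with hN
  have hNX : ∀ h ∈ N, G.I X h := fun h hh => (G.mem_lng.1 hh).1
  have h1 : ∀ u ∈ U, N.card ≤ p ^ 2 + 1 + ((G.pts u).filter (fun x => x ∉ V ∧ ∃ h ∈ N, G.I x h)).card := by
    intro u hu
    rw [hU, mem_erase, mem_sht] at hu
    have hXu : ¬ G.I X u := fun h => hu.1 (G.uniq X Y u l h hu.2.1 hXl hYl hXY)
    have a := G.pencil_inj N X hNX u hXu
    have b : G.sec V u ≤ p ^ 2 + 1 := by
      rcases hgap u with h | h
      · exact h
      · exact absurd h hu.2.2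
    have c : ((G.pts u).filter (fun x => ∃ h ∈ N, G.I x h)).card ≤ G.sec V u +
        ((G.pts u).filter (fun x => x ∉ V ∧ ∃ h ∈ N, G.I x h)).card := by
      rw [sec_eq]
      refine le_trans (card_le_card ?_) (card_union_le _ _)
      intro x; simp only [mem_filter, mem_union]; tauto
    omega
  have h2 : ∑ u ∈ U, ((G.pts u).filter (fun x => x ∉ V ∧ ∃ h ∈ N, G.I x h)).card ≤ N.card * p := by
    rw [← card_biUnion]
    · have : U.biUnion (fun u => (G.pts u).filter (fun x => x ∉ V ∧ ∃ h ∈ N, G.I x h))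
          ⊆ N.biUnion (fun h => (G.pts h).filter (· ∉ V)) := by
        intro x; simp only [mem_biUnion, mem_filter, mem_pts]
        rintro ⟨u, _, _, a, h, b, c⟩
        exact ⟨h, b, c, a⟩
      refine (card_le_card this).trans (card_biUnion_le_card_mul _ _ _ ?_)
      intro h hh
      have := G.holes_eq V h
      have := (G.mem_lng.1 hh).2
      omega
    · intro u hu u' hu' hne
      rw [Function.onFun, Finset.disjoint_left]
      intro x hx hx'
      simp only [mem_filter, mem_pts] at hx hx'
      rw [hU] at hu hu'
      have a := (G.mem_sht.1 (mem_of_mem_erase hu)).1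
      have a' := (G.mem_sht.1 (mem_of_mem_erase hu')).1
      apply hne
      exact G.uniq x Y u u' hx.1 a hx'.1 a' (fun h => hx.2.1 (h ▸ hY))
  have h3 : U.card * (N.card - (p ^ 2 + 1)) ≤ N.card * p := by
    refine le_trans ?_ h2
    rw [← smul_eq_mul]
    apply card_nsmul_le_sum
    intro u hu
    have := h1 u hu; omega
  by_contra hcon
  have h4 : (2 * p + 1) * (N.card - (p ^ 2 + 1)) ≤ N.card * p :=
    le_trans (Nat.mul_le_mul_right _ (by omega)) h3
  obtain ⟨d, hd⟩ : ∃ d, N.card = p ^ 2 + 1 + d := ⟨N.card - (p ^ 2 + 1), by omega⟩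
  rw [hd] at h4 hn
  have : p ^ 2 + 1 + d - (p ^ 2 + 1) = d := by omega
  rw [this] at h4
  nlinarith

lemma T3b_d (hp : p.Prime) (hp3 : 3 < p) {V : Finset P} (hc : ind V ∈ G.C)
    (hgap : ∀ l, G.sec V l ≤ p ^ 2 + 1 ∨ p ^ 4 + 1 ≤ G.sec V l + p)
    (X : P) (hX : X ∈ V) (hne : (G.sht V X).Nonempty) : p ≤ (G.sht V X).card := by
  by_contra hcon
  have := Fact.mk hp
  set B := G.sht V X with hB
  set f : P → ZMod p := (fun _ => 1) - ind V - ∑ m ∈ B, ind (G.pts m) with hf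
  have hfC : f ∈ G.C := G.C.sub_mem (G.C.sub_mem G.one_mem hc)
    (G.C.sum_mem fun m _ => G.ind_pts_mem m)
  have hfv : ∀ y, f y = 1 - ind V y - (G.deg B y : ZMod p) := by
    intro y; rw [← G.sum_ind_pts]; simp [hf]
  have hdX : G.deg B X = B.card := by
    rw [deg]; congr 1; apply filter_true_of_mem
    intro m hm; exact (G.mem_sht.1 hm).1
  have hfX : f X ≠ 0 := by
    rw [hfv, hdX]
    simp only [ind, hX, if_true, sub_self, zero_sub, ne_eq, neg_eq_zero]
    rw [ZMod.natCast_eq_zero_iff]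
    intro h
    have := Nat.le_of_dvd (card_pos.2 hne) h
    omega
  have hdeg : ∀ l, G.I X l → ∀ x, x ≠ X → G.I x l → G.deg B x = if l ∈ B then 1 else 0 := by
    intro l hl x hx hxl
    have h1 : B.filter (fun m => G.I x m) = if l ∈ B then {l} else ∅ := by
      ext m; simp only [mem_filter]
      have h2 : m ∈ B → G.I x m → m = l := fun h1 h2 =>
        G.uniq x X m l h2 (G.mem_sht.1 h1).1 hxl hl hx
      constructor
      · rintro ⟨a, b⟩
        have := h2 a b
        subst this; simp [a]
      · split_ifs with h
        · intro h'; rw [mem_singleton] at h'; subst h'; exact ⟨h, hxl⟩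
        · simp
    rw [deg, h1]; split_ifs <;> simp
  have hsec : ∀ l ∈ G.lns X, G.sec (supp f) l ≤ (p + 1) + (if l ∈ B then 1 else 0) * (p ^ 2 + 1) := by
    intro l hl
    have hXl := G.mem_lns.1 hl
    split_ifs with h
    · have h1 : G.sec (supp f) l ≤ G.sec V l := by
        rw [sec_eq, sec_eq]; apply card_le_card
        intro x; simp only [mem_filter]
        rintro ⟨a, b⟩
        refine ⟨a, ?_⟩
        by_contra hxV
        have hxX : x ≠ X := by rintro rfl; exact hxV hX
        rw [mem_supp, hfv, hdeg l hXl x hxX (G.mem_pts.1 a), if_pos h] at b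
        simp [ind, hxV] at b
      have b : G.sec V l ≤ p ^ 2 + 1 := by
        rcases hgap l with h' | h'
        · exact h'
        · exact absurd h' (G.mem_sht.1 h).2
      omega
    · have h1 : G.sec (supp f) l ≤ ((G.pts l).filter (· ∉ V)).card + 1 := by
        rw [sec_eq]
        refine le_trans (card_le_card (t := insert X ((G.pts l).filter (· ∉ V))) ?_) (card_insert_le _ _)
        intro x; simp only [mem_filter, mem_insert]
        rintro ⟨a, b⟩
        by_cases hxX : x = X
        · exact Or.inl hxX
        · refine Or.inr ⟨a, ?_⟩
          intro hxV
          rw [mem_supp, hfv, hdeg l hXl x hxX (G.mem_pts.1 a), if_neg h] at b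
          simp [ind, hxV] at b
      have h2 := G.holes_eq V l
      have h3 : p ^ 4 + 1 ≤ G.sec V l + p := by
        by_contra h3
        exact h (G.mem_sht.2 ⟨hXl, h3⟩)
      omega
  have hQ : p ^ 4 = p ^ 2 * p ^ 2 := by ring
  have hQ6 : p ^ 6 = p ^ 2 * p ^ 2 * p ^ 2 := by ring
  have hqq : 16 ≤ p ^ 2 := by nlinarith
  have hpq : 4 * p ≤ p ^ 2 := by nlinarith
  have hw : (supp f).card + p ^ 2 < p ^ 6 := by
    have h1 := sum_le_sum hsec
    rw [G.count_on (mem_supp.2 hfX), sum_add_distrib, ← sum_mul, ← card_filter, sum_const,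
      card_lns, smul_eq_mul, filter_mem_eq_inter] at h1
    have h2 : (G.lns X ∩ B).card ≤ p := (card_le_card inter_subset_right).trans (by omega)
    have h3 : (G.lns X ∩ B).card * (p ^ 2 + 1) ≤ p * (p ^ 2 + 1) := Nat.mul_le_mul_right _ h2
    rw [hQ] at h1
    rw [hQ6]
    set q := p ^ 2
    have e1 : 4 * p * (q * q) ≤ q * q * q := by nlinarith
    have e2 : 16 * q ≤ q * q := by nlinarith
    have e3 : 16 * (q * q) ≤ q * q * q := by nlinarith
    nlinarith
  obtain ⟨l, hl1, hl2⟩ := G.LL2 hp.one_lt hfC hfX hw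
  have h1 := hsec l (G.mem_lns.2 hl1)
  have h2 : (if l ∈ B then 1 else 0) * (p ^ 2 + 1) ≤ p ^ 2 + 1 := by split_ifs <;> omega
  rw [hQ] at hl2
  nlinarith

lemma T3b_b (hp3 : 3 < p) {V : Finset P}
    (hgap : ∀ l, G.sec V l ≤ p ^ 2 + 1 ∨ p ^ 4 + 1 ≤ G.sec V l + p)
    (l : L) (hq : G.sec V l ≤ p ^ 2) (hw : (p ^ 2 + 1) * (p ^ 4 + 1) < V.card)
    (X : P) (hX : X ∈ V) : 2 * p ^ 2 + 2 ≤ (G.lng V X).card := by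
  have hQ : p ^ 4 = p ^ 2 * p ^ 2 := by ring
  have hqq : 16 ≤ p ^ 2 := by nlinarith
  have hpq : 4 * p ≤ p ^ 2 := by nlinarith
  have hlong : ∀ R ∈ (G.pts l).filter (· ∉ V), ∃ h, G.I R h ∧ p ^ 4 + 1 ≤ G.sec V h + p := by
    intro R hR
    rw [mem_filter] at hR
    by_contra hcon
    push Not at hcon
    have h1 : ∀ h ∈ G.lns R, G.sec V h ≤ p ^ 2 + 1 := by
      intro h hh
      rcases hgap h with h' | h'
      · exact h'
      · exact absurd h' (by have := hcon h (G.mem_lns.1 hh); omega)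
    have h2 := sum_le_card_nsmul _ _ _ h1
    rw [G.count_off hR.2, card_lns, smul_eq_mul] at h2
    nlinarith
  have : Nonempty L := ⟨l⟩
  choose! φ h1 h2 using hlong
  have hcard : (((G.pts l).filter (· ∉ V)).image φ).card = ((G.pts l).filter (· ∉ V)).card := by
    apply card_image_of_injOn
    intro R hR R' hR' he
    by_contra hne
    have a : G.I R' (φ R) := by rw [he]; exact h1 R' hR'
    have hR1 := mem_filter.1 (mem_coe.1 hR)
    have hR2 := mem_filter.1 (mem_coe.1 hR')
    have : φ R = l := G.uniq R R' (φ R) l (h1 R hR) a (G.mem_pts.1 hR1.1) (G.mem_pts.1 hR2.1) hne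
    have b := h2 R hR
    rw [this, hQ] at b
    nlinarith
  have hh := G.holes_eq V l
  obtain ⟨M, hM1, hM2⟩ := exists_subset_card_eq
    (show 4 * p ^ 2 ≤ (((G.pts l).filter (· ∉ V)).image φ).card by
      rw [hcard]; rw [hQ] at hh; nlinarith)
  have hub := G.union_bound' V M (p ^ 4 + 1 - p) (by
    intro m hm
    obtain ⟨R, hR, rfl⟩ := mem_image.1 (hM1 hm)
    have := h2 R hR; omega)
  rw [hM2] at hub
  by_contra hcon
  have h3 : ∀ h ∈ G.lns X, G.sec V h ≤ (p ^ 2 + 1) +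
      (if p ^ 4 + 1 ≤ G.sec V h + p then 1 else 0) * (p ^ 4 - p ^ 2) := by
    intro h _
    split_ifs with hh
    · have := G.sec_le V h
      have : p ^ 2 ≤ p ^ 4 := by rw [hQ]; nlinarith
      omega
    · rcases hgap h with h' | h'
      · omega
      · exact absurd h' hh
  have h4 := sum_le_sum h3
  rw [G.count_on hX, sum_add_distrib, ← sum_mul, ← card_filter, sum_const,
      card_lns, smul_eq_mul] at h4
  change _ ≤ _ + (G.lng V X).card * _ at h4
  have h5 : (G.lng V X).card * (p ^ 4 - p ^ 2) ≤ (2 * p ^ 2 + 1) * (p ^ 4 - p ^ 2) :=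
    Nat.mul_le_mul_right _ (by omega)
  rw [hQ] at hub h4 h5 hw
  set q := p ^ 2
  have e1 : q ≤ q * q := by nlinarith
  have e2 : p ≤ q * q + 1 := by nlinarith
  have e3 : 1 ≤ 4 * q := by omega
  have e4 : 16 * q ≤ q * q := by nlinarith
  have e5 : 16 * (q * q) ≤ q * q * q := by nlinarith
  have e6 : 4 * p * q ≤ q * q := by nlinarith
  zify [e1, e2, e3] at *
  nlinarith

lemma T3b (hp : p.Prime) (hp3 : 3 < p) {V : Finset P} (hc : ind V ∈ G.C)
    (hs : ∀ l, ∃ k, G.sec V l = 1 + k * p)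
    (hgap : ∀ l, G.sec V l ≤ p ^ 2 + 1 ∨ p ^ 4 + 1 ≤ G.sec V l + p)
    (l : L) (hl2 : 2 ≤ G.sec V l) (hq : G.sec V l ≤ p ^ 2) :
    V.card ≤ (p ^ 2 + 1) * (p ^ 4 + 1) := by
  by_contra hw
  push Not at hw
  have hb := G.T3b_b hp3 hgap l hq hw
  have hp0 := hp.pos
  have hQ : p ^ 4 = p ^ 2 * p ^ 2 := by ring
  have hpq : 4 * p ≤ p ^ 2 := by nlinarith
  have hlsht : ¬ p ^ 4 + 1 ≤ G.sec V l + p := by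
    rw [hQ]; nlinarith
  have h3 : 2 < (univ.filter (fun x => G.I x l ∧ x ∈ V)).card := by
    change 2 < G.sec V l
    obtain ⟨k, hk⟩ := hs l
    have : 1 ≤ k := by
      by_contra h
      have : k = 0 := by omega
      subst this; omega
    have : p ≤ k * p := by nlinarith
    omega
  obtain ⟨P0, h0, P1, h1, P2, h2, h01, h02, h12⟩ := two_lt_card.1 h3
  simp only [mem_filter, mem_univ, true_and] at h0 h1 h2
  have hE : ∀ X, G.I X l → X ∈ V → ∃ E ⊆ (G.sht V X).erase l, E.card = p - 1 := by
    intro X hX hXV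
    apply exists_subset_card_eq
    have hmem : l ∈ G.sht V X := G.mem_sht.2 ⟨hX, hlsht⟩
    have := G.T3b_d hp hp3 hc hgap X hXV ⟨l, hmem⟩
    rw [card_erase_of_mem hmem]; omega
  obtain ⟨E1, hE1, hc1⟩ := hE P1 h1.1 h1.2
  obtain ⟨E2, hE2, hc2⟩ := hE P2 h2.1 h2.2
  have hs0 := G.T3b_c hp3 hgap l P1 P0 h1.1 h0.1 h01.symm h0.2 (hb P1 h1.2)
  have hs0' : (G.sht V P0).card ≤ 2 * p + 1 := by
    have := card_le_card (G.sht V P0 |>.insert_erase_subset l)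
    have := card_insert_le l ((G.sht V P0).erase l)
    omega
  have hdisj : Disjoint E1 E2 := by
    rw [Finset.disjoint_left]
    intro e he he'
    have a := hE1 he; have a' := hE2 he'
    rw [mem_erase, mem_sht] at a a'
    exact a.1 (G.uniq P1 P2 e l a.2.1 a'.2.1 h1.1 h2.1 h12)
  set E := E1 ∪ E2 with hEdef
  have hEc : E.card = 2 * p - 2 := by
    rw [hEdef, card_union_of_disjoint hdisj, hc1, hc2]; omega
  have hE0 : ∀ e ∈ E, ¬ G.I P0 e ∧ G.sec V e ≤ p ^ 2 + 1 := by
    intro e he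
    rw [hEdef, mem_union] at he
    rcases he with he | he
    · have a := hE1 he
      rw [mem_erase, mem_sht] at a
      refine ⟨fun h => a.1 (G.uniq P0 P1 e l h a.2.1 h0.1 h1.1 h01), ?_⟩
      rcases hgap e with h | h
      · exact h
      · exact absurd h a.2.2
    · have a := hE2 he
      rw [mem_erase, mem_sht] at a
      refine ⟨fun h => a.1 (G.uniq P0 P2 e l h a.2.1 h0.1 h2.1 h02), ?_⟩
      rcases hgap e with h | h
      · exact h
      · exact absurd h a.2.2
  set Z : Finset P := E.biUnion (fun e => univ.filter (fun x => G.I x e ∧ x ∈ V)) ∪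
    E.biUnion (fun e => (G.pts e).filter (fun x => 2 ≤ G.deg E x)) with hZ
  have hZc : Z.card ≤ (2 * p - 2) * (p ^ 2 + 1) + (2 * p - 2) * (2 * p - 2) := by
    refine (card_union_le _ _).trans (add_le_add ?_ ?_)
    · rw [← hEc]; exact card_biUnion_le_card_mul _ _ _ (fun e he => (hE0 e he).2)
    · nth_rewrite 1 [← hEc]
      apply card_biUnion_le_card_mul
      intro e he
      have := G.deg2_on E e he
      omega
  have hP0Z : P0 ∉ Z := by
    simp only [hZ, mem_union, mem_biUnion, mem_filter, mem_univ, true_and, mem_pts]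
    rintro (⟨e, he, a, _⟩ | ⟨e, he, a, _⟩) <;> exact (hE0 e he).1 a
  have hcount := G.count_off hP0Z
  obtain ⟨h, hh, hhs, hhZ⟩ : ∃ h ∈ G.lns P0, h ∉ G.sht V P0 ∧ G.sec Z h = 0 := by
    by_contra hcon
    push Not at hcon
    have h1 : ∑ l ∈ G.lns P0, 1 ≤ ∑ l ∈ G.lns P0, ((if l ∈ G.sht V P0 then 1 else 0) + G.sec Z l) := by
      apply sum_le_sum
      intro l hl
      by_cases h : l ∈ G.sht V P0
      · simp [h]
      · have := hcon l hl h; omega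
    rw [sum_add_distrib, hcount, ← card_filter, filter_mem_eq_inter] at h1
    have h2 := card_le_card (inter_subset_right : G.lns P0 ∩ G.sht V P0 ⊆ _)
    simp only [sum_const, card_lns, smul_eq_mul, mul_one] at h1
    have e1 : 2 ≤ 2 * p := by omega
    have h5 : p ^ 4 + 1 ≤ 2 * p + 1 + ((2 * p - 2) * (p ^ 2 + 1) + (2 * p - 2) * (2 * p - 2)) := by omega
    have h6 : 4 * p ^ 3 ≤ p ^ 4 := by
      have : p ^ 4 = p * p ^ 3 := by ring
      rw [this]; exact Nat.mul_le_mul_right _ (by omega)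
    have h7 : 4 * p ^ 2 ≤ p ^ 3 := by
      have : p ^ 3 = p * p ^ 2 := by ring
      rw [this]; exact Nat.mul_le_mul_right _ (by omega)
    zify [e1] at *
    nlinarith
  have hlong : p ^ 4 + 1 ≤ G.sec V h + p := by
    by_contra hc'
    exact hhs (G.mem_sht.2 ⟨G.mem_lns.1 hh, hc'⟩)
  have hholes := G.holes_eq V h
  have hnoz : ∀ y, G.I y h → y ∉ Z := by
    intro y hy hyZ
    have : 0 < G.sec Z h := by
      rw [sec_eq, card_pos]; exact ⟨y, by simp [G.mem_pts.2 hy, hyZ]⟩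
    omega
  have hinj : E.card ≤ ((G.pts h).filter (· ∉ V)).card := by
    have hm : ∀ e ∈ E, ∃ y, G.I y h ∧ G.I y e := by
      intro e he
      apply G.meet
      rintro rfl; exact (hE0 _ he).1 (G.mem_lns.1 hh)
    have : Nonempty P := ⟨P0⟩
    choose! φ k1 k2 using hm
    apply card_le_card_of_injOn φ
    · intro e he
      simp only [coe_filter, Set.mem_ofPred_eq, mem_pts]
      refine ⟨k1 e he, fun hv => hnoz _ (k1 e he) ?_⟩
      simp only [hZ, mem_union, mem_biUnion, mem_filter, mem_univ, true_and]
      exact Or.inl ⟨e, he, k2 e he, hv⟩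
    · intro e he e' he' heq
      by_contra hne
      apply hnoz _ (k1 e he)
      simp only [hZ, mem_union, mem_biUnion, mem_filter, mem_univ, true_and, mem_pts]
      refine Or.inr ⟨e, he, k2 e he, ?_⟩
      rw [deg]
      apply one_lt_card.2
      refine ⟨e, ?_, e', ?_, hne⟩
      · exact mem_filter.2 ⟨he, k2 e he⟩
      · exact mem_filter.2 ⟨he', heq ▸ k2 e' he'⟩
  omega

lemma T3 (hp : p.Prime) (hp3 : 3 < p) {V : Finset P} (hc : ind V ∈ G.C)
    (hs : ∀ l, ∃ k, G.sec V l = 1 + k * p)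
    (hgap : ∀ l, G.sec V l ≤ p ^ 2 + 1 ∨ p ^ 4 + 1 ≤ G.sec V l + p)
    (l : L) (hl2 : 2 ≤ G.sec V l) (hq : G.sec V l ≤ p ^ 2) :
    (V.card = 1 + G.sec V l * p ^ 4) ∨
    (V.card + p ^ 3 + p ^ 2 = (p ^ 2 + 1) * (p ^ 4 + 1) ∧ ∃ m, G.sec V m + p = p ^ 2 + 1) := by
  have hw := G.T3b hp hp3 hc hs hgap l hl2 hq
  have hQ : p ^ 4 = p ^ 2 * p ^ 2 := by ring
  have hpq : 4 * p ≤ p ^ 2 := by nlinarith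
  have hgap' : ∀ l, G.sec V l ≤ p ^ 2 + 1 ∨ p ^ 4 + 1 ≤ G.sec V l + p ^ 2 := by
    intro l
    rcases hgap l with h | h
    · exact Or.inl h
    · right; omega
  have hl : l ∉ G.longs V := by
    rw [mem_longs, hQ]; intro h; nlinarith
  obtain ⟨g, hg⟩ : ∃ g, g ∈ G.longs V := by
    by_contra hcon
    push Not at hcon
    refine G.noLong hp hp3 hc hs ?_ l hl2 hq
    intro m
    rcases hgap' m with h | h
    · exact h
    · exact absurd (G.mem_longs.2 h) (hcon m)
  have hdeg := G.structure_deg hp hp3 hc hgap' hw g hg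
  obtain ⟨k, hk1, hk2⟩ := G.structure_card hp hp3 hc hs hgap' hw g hg
  by_cases hX : ∃ X, ∀ m ∈ G.longs V, G.I X m
  · obtain ⟨X, hX⟩ := hX
    exact Or.inl (G.concurrent hp hdeg hk2 X hX l hl hl2)
  · push Not at hX
    exact Or.inr (G.classify hp hp3 hdeg hk1 hk2 hX)

end PlaneCode

end PlanePart5


section KeyPart

open Finset Classical Polynomial

lemma sum_eval_zero {F : Type} [Field F] [Fintype F] (h : F[X])
    (hd : h.natDegree < Fintype.card F - 1) : ∑ x, h.eval x = 0 := by
  simp_rw [eval_eq_sum_range]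
  rw [sum_comm]
  apply sum_eq_zero
  intro i hi
  rw [← mul_sum, FiniteField.sum_pow_lt_card_sub_one, mul_zero]
  have := mem_range.1 hi
  omega

lemma moment_hyp {F : Type} [Field F] [Fintype F] (α β γ : F) (n : ℕ) :
    (∑ x, C (x ^ n) * (1 - (C (α * x + β) + C γ * X) ^ (Fintype.card F - 1)) : F[X]).natDegree
      ≤ n := by
  set N := Fintype.card F - 1
  simp_rw [mul_sub, sum_sub_distrib]
  refine (natDegree_sub_le _ _).trans (max_le ?_ ?_)
  · simp only [mul_one]
    rw [← map_sum, natDegree_C]; exact Nat.zero_le _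
  · simp_rw [add_pow, mul_sum]
    rw [sum_comm]
    apply natDegree_sum_le_of_forall_le
    intro i hi
    have hi := mem_range.1 hi
    have h1 : ∑ x, C (x ^ n) * (C (α * x + β) ^ i * (C γ * X) ^ (N - i) * ((N.choose i : ℕ) : F[X]))
        = C (∑ x, x ^ n * (α * x + β) ^ i) * (C (γ ^ (N - i) * (N.choose i : ℕ)) * X ^ (N - i)) := by
      rw [map_sum, sum_mul]
      apply sum_congr rfl
      intro x _
      simp only [map_mul, map_pow, mul_pow, map_natCast]
      ring
    rw [h1]
    by_cases h : N - i ≤ n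
    · refine (natDegree_C_mul_le _ _).trans ((natDegree_C_mul_le _ _).trans ?_)
      simpa using h
    · have h2 : ∑ x, x ^ n * (α * x + β) ^ i = 0 := by
        have h3 := sum_eval_zero (X ^ n * (C α * X + C β) ^ i : F[X]) (by
          refine lt_of_le_of_lt (natDegree_mul_le) ?_
          rw [natDegree_X_pow]
          have a : ((C α * X + C β) ^ i : F[X]).natDegree ≤ i * 1 :=
            natDegree_pow_le_of_le i (natDegree_linear_le)
          omega)
        simpa using h3
      rw [h2]; simp

lemma key_alg {F : Type} [Field F] [Fintype F] (g : F → F[X])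
    (hg : ∀ n, (∑ x, C (x ^ n) * g x : F[X]).natDegree ≤ n) (y0 : F) :
    ∑ y, ((univ.filter (fun x => (g x).eval y0 ≠ 0)).card
        - (univ.filter (fun x => (g x).eval y ≠ 0)).card)
      ≤ (univ.filter (fun x => (g x).eval y0 ≠ 0)).card
        * ((univ.filter (fun x => (g x).eval y0 ≠ 0)).card - 1) := by
  set S0 : Finset F := univ.filter (fun x => (g x).eval y0 ≠ 0) with hS0
  set s := S0.card with hs
  set A : Matrix (Fin s) (Fin s) F[X] :=
    Matrix.of (fun i j => ∑ x, C (x ^ ((i : ℕ) + (j : ℕ))) * g x) with hA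
  have hAij : ∀ i j : Fin s, A i j = ∑ x, C (x ^ ((i : ℕ) + (j : ℕ))) * g x := fun _ _ => rfl
  have hdeg : A.det.natDegree ≤ s * (s - 1) := by
    rw [Matrix.det_apply]
    apply natDegree_sum_le_of_forall_le
    intro σ _
    rw [Units.smul_def, zsmul_eq_mul]
    refine (natDegree_mul_le).trans ?_
    have h0 : (((Equiv.Perm.sign σ : ℤˣ) : ℤ) : F[X]).natDegree = 0 := natDegree_intCast _
    rw [h0, zero_add]
    refine (natDegree_prod_le _ _).trans ?_
    refine (sum_le_sum (g := fun i : Fin s => ((σ i : Fin s) : ℕ) + (i : ℕ)) fun i _ => hg _).trans ?_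
    rw [sum_add_distrib, Equiv.sum_comp σ (fun i : Fin s => (i : ℕ)), Fin.sum_univ_eq_sum_range (fun i => i) s,
      ← Finset.sum_range_id_mul_two]
    omega
  have hne : A.det.eval y0 ≠ 0 := by
    let e : Fin s ≃ S0 := S0.equivFin.symm
    let w : Fin s → F := fun i => (e i : F)
    have hmat : (A.map (eval y0)) = (Matrix.vandermonde w).transpose *
        Matrix.diagonal (fun i => (g (w i)).eval y0) * Matrix.vandermonde w := by
      ext i j
      rw [Matrix.map_apply, hAij]
      rw [Matrix.mul_apply]
      simp only [Matrix.mul_diagonal, Matrix.transpose_apply, Matrix.vandermonde_apply]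
      rw [eval_finsetSum]
      have h1 : ∑ k, w k ^ (i : ℕ) * eval y0 (g (w k)) * w k ^ (j : ℕ)
          = ∑ x : S0, (x : F) ^ (i : ℕ) * eval y0 (g x) * (x : F) ^ (j : ℕ) :=
        Equiv.sum_comp e (fun x : S0 => (x : F) ^ (i : ℕ) * eval y0 (g x) * (x : F) ^ (j : ℕ))
      rw [h1, sum_coe_sort S0 (fun x : F => x ^ (i : ℕ) * eval y0 (g x) * x ^ (j : ℕ)), hS0, sum_filter]
      apply sum_congr rfl
      intro x _
      split_ifs with h
      · simp [pow_add]; ring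
      · simp only [ne_eq, not_not] at h
        simp [h]
    have h2 : A.det.eval y0 = (A.map (eval y0)).det := by
      have := RingHom.map_det (evalRingHom y0) A
      simpa using this
    rw [h2, hmat, Matrix.det_mul, Matrix.det_mul, Matrix.det_transpose, Matrix.det_diagonal]
    have hv : (Matrix.vandermonde w).det ≠ 0 := by
      rw [Matrix.det_vandermonde_ne_zero_iff]
      intro i j hij
      exact e.injective (Subtype.ext hij)
    refine mul_ne_zero (mul_ne_zero hv ?_) hv
    rw [prod_ne_zero_iff]
    intro i _
    have hmem : ∀ x ∈ S0, (g x).eval y0 ≠ 0 := fun x hx => (mem_filter.1 hx).2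
    exact hmem _ (e i).2
  have hdvd : ∀ y, (X - C y) ^ (s - (univ.filter (fun x => (g x).eval y ≠ 0)).card) ∣ A.det := by
    intro y
    have hrow : A = Matrix.of (fun i : Fin s => ∑ x, (C (x ^ (i : ℕ)) * g x) • (fun j : Fin s => C (x ^ (j : ℕ)))) := by
      ext1 i j
      simp only [hA, Matrix.of_apply, Finset.sum_apply, Pi.smul_apply, smul_eq_mul]
      apply sum_congr rfl
      intro x _
      rw [pow_add, map_mul]; ring
    have hexp : A.det = ∑ φ : Fin s → F, (∏ i, (C (φ i ^ (i : ℕ)) * g (φ i))) •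
        Matrix.det (fun i j : Fin s => (C (φ i ^ (j : ℕ)) : F[X])) := by
      have h1 := (Matrix.detRowAlternating (n := Fin s) (R := F[X])).toMultilinearMap.map_sum
        (fun (i : Fin s) (x : F) => (C (x ^ (i : ℕ)) * g x) • (fun j : Fin s => (C (x ^ (j : ℕ)) : F[X])))
      rw [hrow]
      refine h1.trans ?_
      apply sum_congr rfl
      intro φ _
      exact (Matrix.detRowAlternating (n := Fin s) (R := F[X])).toMultilinearMap.map_smul_univ
        (fun i => C (φ i ^ (i : ℕ)) * g (φ i)) (fun i => (fun j : Fin s => (C (φ i ^ (j : ℕ)) : F[X])))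
    rw [hexp]
    apply dvd_sum
    intro φ _
    by_cases hφ : Function.Injective φ
    · rw [smul_eq_mul]
      apply dvd_mul_of_dvd_left
      rw [prod_mul_distrib]
      apply dvd_mul_of_dvd_right
      have h1 : (X - C y) ^ (univ.filter (fun i => (g (φ i)).eval y = 0)).card ∣ ∏ i, g (φ i) := by
        rw [← prod_const]
        refine dvd_trans ?_ (prod_dvd_prod_of_subset (univ.filter (fun i => (g (φ i)).eval y = 0)) univ _
          (subset_univ _))
        apply prod_dvd_prod_of_dvd
        intro i hi
        rw [mem_filter] at hi
        exact dvd_iff_isRoot.2 hi.2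
      refine dvd_trans (pow_dvd_pow _ ?_) h1
      have h2 : (univ.filter (fun i : Fin s => (g (φ i)).eval y = 0)).card
          + (univ.filter (fun i : Fin s => ¬ (g (φ i)).eval y = 0)).card = s := by
        rw [card_filter_add_card_filter_not]; simp
      have h3 : (univ.filter (fun i : Fin s => ¬ (g (φ i)).eval y = 0)).card
          ≤ (univ.filter (fun x => (g x).eval y ≠ 0)).card := by
        apply card_le_card_of_injOn φ
        · intro i hi
          simpa using hi
        · exact hφ.injOn
      omega
    · rw [Function.Injective] at hφ
      push Not at hφ
      obtain ⟨i, j, hij, hne⟩ := hφ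
      have : Matrix.det (fun i j : Fin s => (C (φ i ^ (j : ℕ)) : F[X])) = 0 := by
        apply Matrix.det_zero_of_row_eq hne
        ext1 k; simp only [hij]
      rw [this]; simp
  have hprod : ∏ y, (X - C y) ^ (s - (univ.filter (fun x => (g x).eval y ≠ 0)).card) ∣ A.det := by
    apply Finset.prod_dvd_of_coprime
    · intro a _ b _ hab
      exact IsCoprime.pow (isCoprime_X_sub_C_of_isUnit_sub (sub_ne_zero.2 hab).isUnit)
    · intro y _; exact hdvd y
  have hD0 : A.det ≠ 0 := by
    intro h; rw [h] at hne; simp at hne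
  have h3 := natDegree_le_of_dvd hprod hD0
  rw [natDegree_prod_of_monic _ _ (fun y _ => (monic_X_sub_C y).pow _)] at h3
  simp only [natDegree_pow, natDegree_X_sub_C, mul_one] at h3
  exact h3.trans hdeg

end KeyPart


section Basics

open Finset Classical

variable {F : Type} [Field F] {n : ℕ}

noncomputable instance fintypeSub [Fintype F] : Fintype (Submodule F (Fin n → F)) :=
  Fintype.ofInjective (fun W => (W : Set (Fin n → F))) SetLike.coe_injective

noncomputable instance fintypePP [Fintype F] : Fintype (ProjPoint F n) := by
  unfold ProjPoint; infer_instance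

/-- the point spanned by a nonzero vector -/
def mkpt (v : Fin n → F) (hv : v ≠ 0) : ProjPoint F n :=
  ⟨Submodule.span F {v}, finrank_span_singleton hv⟩

lemma exists_mkpt (X : ProjPoint F n) : ∃ v : Fin n → F, ∃ hv : v ≠ 0, X = mkpt v hv := by
  obtain ⟨W, hW⟩ := X
  obtain ⟨v, hv, h⟩ := finrank_eq_one_iff'.1 hW
  refine ⟨v, fun h0 => hv (Subtype.ext h0), Subtype.ext ?_⟩
  apply le_antisymm
  · intro w hw
    obtain ⟨c, hc⟩ := h ⟨w, hw⟩
    rw [mkpt, Submodule.mem_span_singleton]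
    exact ⟨c, congrArg Subtype.val hc⟩
  · rw [mkpt, Submodule.span_singleton_le_iff_mem]; exact v.2

lemma mkpt_le {v : Fin n → F} {hv : v ≠ 0} {W : Submodule F (Fin n → F)} :
    (mkpt v hv).1 ≤ W ↔ v ∈ W := by
  rw [mkpt, Submodule.span_singleton_le_iff_mem]

lemma pt_eq_of_le {X Y : ProjPoint F n} (h : X.1 ≤ Y.1) : X = Y := 
  Subtype.ext (Submodule.eq_of_le_of_finrank_eq h (X.2.trans Y.2.symm))

lemma mkpt_eq_iff {v w : Fin n → F} {hv : v ≠ 0} {hw : w ≠ 0} :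
    mkpt v hv = mkpt w hw ↔ ∃ c : F, c • w = v := by
  rw [← Submodule.mem_span_singleton]
  constructor
  · intro h
    have : v ∈ (mkpt v hv).1 := Submodule.mem_span_singleton_self v
    rw [h] at this; exact this
  · intro h
    exact pt_eq_of_le (mkpt_le.2 h)

lemma line_span {l : Submodule F (Fin n → F)} (hl : finrank F l = 2) {a b : Fin n → F}
    (ha0 : a ≠ 0) (ha : a ∈ l) (hb : b ∈ l) (hab : b ∉ Submodule.span F {a}) :
    l = Submodule.span F {a, b} := by
  symm
  apply Submodule.eq_of_le_of_finrank_eq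
  · rw [Submodule.span_le]
    rintro x (rfl | rfl)
    · exact ha
    · exact hb
  · have hli : LinearIndependent F ![a, b] := by
      rw [LinearIndependent.pair_iff]
      intro s t h
      have ht : t = 0 := by
        by_contra ht
        apply hab
        rw [Submodule.mem_span_singleton]
        refine ⟨-(t⁻¹ * s), ?_⟩
        have h2 : t⁻¹ • (s • a + t • b) = 0 := by rw [h, smul_zero]
        rw [smul_add, smul_smul, smul_smul, inv_mul_cancel₀ ht, one_smul] at h2
        rw [neg_smul]
        exact neg_eq_of_add_eq_zero_right h2
      subst ht
      rw [zero_smul, add_zero] at h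
      exact ⟨(smul_eq_zero.1 h).resolve_right ha0, rfl⟩
    have := finrank_span_eq_card hli
    rw [hl]
    rw [Matrix.range_cons_cons_empty] at this
    simpa using this

lemma line_repr {l : Submodule F (Fin n → F)} (hl : finrank F l = 2) {a b : Fin n → F}
    (ha0 : a ≠ 0) (ha : a ∈ l) (hb : b ∈ l) (hab : b ∉ Submodule.span F {a}) {v : Fin n → F}
    (hv : v ∈ l) : ∃ c d : F, c • a + d • b = v := by
  rw [line_span hl ha0 ha hb hab] at hv
  exact Submodule.mem_span_pair.1 hv

lemma sup_pt {U : Submodule F (Fin n → F)} {X : ProjPoint F n} (h : ¬ X.1 ≤ U) :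
    finrank F (U ⊔ X.1 : Submodule F (Fin n → F)) = finrank F U + 1 := by
  have h1 := Submodule.finrank_sup_add_finrank_inf_eq U X.1
  have h2 : finrank F (U ⊓ X.1 : Submodule F (Fin n → F)) = 0 := by
    by_contra h0
    apply h
    have h3 : finrank F (U ⊓ X.1 : Submodule F (Fin n → F)) ≤ finrank F X.1 :=
      Submodule.finrank_mono inf_le_right
    have := X.2
    have h4 : U ⊓ X.1 = X.1 := Submodule.eq_of_le_of_finrank_eq inf_le_right (by omega)
    rw [← h4]; exact inf_le_left
  have := X.2
  omega

lemma exists_ker {H : Submodule F (Fin n → F)} (hn : 1 ≤ n) (hH : finrank F H = n - 1) :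
    ∃ φ : (Fin n → F) →ₗ[F] F, ∀ v, v ∈ H ↔ φ v = 0 := by
  have hlt : H < ⊤ := by
    rw [lt_top_iff_ne_top]
    rintro rfl
    rw [finrank_top, finrank_fin_fun] at hH
    omega
  obtain ⟨φ, h0, hle⟩ := Submodule.exists_le_ker_of_lt_top H hlt
  have h1 := Module.Dual.finrank_ker_add_one_of_ne_zero (f := φ) h0
  rw [finrank_fin_fun] at h1
  have : H = LinearMap.ker φ := Submodule.eq_of_le_of_finrank_eq hle (by omega)
  exact ⟨φ, fun v => by rw [this, LinearMap.mem_ker]⟩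

variable [Fintype F]

lemma npts (W : Submodule F (Fin n → F)) :
    (univ.filter (fun X : ProjPoint F n => X.1 ≤ W)).card * (Fintype.card F - 1)
      = Fintype.card F ^ finrank F W - 1 := by
  have h1 := Projectivization.card F W
  have h2 : Nat.card (Projectivization F W)
      = (univ.filter (fun X : ProjPoint F n => X.1 ≤ W)).card := by
    rw [Nat.card_congr (Projectivization.equivSubmodule F W), ← Fintype.card_subtype,
      ← Nat.card_eq_fintype_card]
    apply Nat.card_congr
    refine Equiv.ofBijective (fun K => ⟨⟨K.1.map W.subtype, ?_⟩, Submodule.map_subtype_le _ _⟩) ⟨?_, ?_⟩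
    · exact (Submodule.finrank_map_subtype_eq W K.1).trans K.2
    · intro K K' h
      have h := congrArg (fun z => z.1.1) h
      exact Subtype.ext (Submodule.map_injective_of_injective W.injective_subtype h)
    · rintro ⟨⟨K, hK⟩, hKW⟩
      have hm : (K.comap W.subtype).map W.subtype = K := by
        rw [Submodule.map_comap_subtype]; exact inf_eq_right.2 hKW
      refine ⟨⟨K.comap W.subtype, ?_⟩, ?_⟩
      · rw [← hK]
        conv_rhs => rw [← hm]
        exact (Submodule.finrank_map_subtype_eq W _).symm
      · exact Subtype.ext (Subtype.ext hm)
  rw [← h2, ← Nat.card_eq_fintype_card, ← h1, Module.natCard_eq_pow_finrank (K := F)]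

end Basics


section Covers

open Finset Classical

variable {F : Type} [Field F] {n : ℕ} [Fintype F]

/-- the subspaces covering `U` inside `W` -/
noncomputable def cov (U W : Submodule F (Fin n → F)) : Finset (Submodule F (Fin n → F)) :=
  univ.filter (fun K => U ≤ K ∧ K ≤ W ∧ finrank F K = finrank F U + 1)

lemma cover_count (U W : Submodule F (Fin n → F)) (hUW : U ≤ W) (S : Finset (ProjPoint F n)) :
    (S.filter (fun X => X.1 ≤ W ∧ ¬ X.1 ≤ U)).card
      = ∑ K ∈ cov U W, (S.filter (fun X => X.1 ≤ K ∧ ¬ X.1 ≤ U)).card := by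
  rw [card_eq_sum_card_fiberwise (f := fun X : ProjPoint F n => U ⊔ X.1) (t := cov U W)]
  · apply sum_congr rfl
    intro K hK
    simp only [cov, mem_filter, mem_univ, true_and] at hK
    obtain ⟨h1, h2, h3⟩ := hK
    congr 1
    ext X
    simp only [mem_filter]
    constructor
    · rintro ⟨⟨hS, hW, hU⟩, rfl⟩
      exact ⟨hS, le_sup_right, hU⟩
    · rintro ⟨hS, hK, hU⟩
      refine ⟨⟨hS, hK.trans h2, hU⟩, ?_⟩
      exact Submodule.eq_of_le_of_finrank_eq (sup_le h1 hK) ((sup_pt hU).trans h3.symm)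
  · intro X hX
    simp only [coe_filter, Set.mem_ofPred_eq] at hX
    simp only [cov, coe_filter, mem_univ, true_and, Set.mem_ofPred_eq]
    exact ⟨le_sup_left, sup_le hUW hX.2.1, sup_pt hX.2.2⟩

lemma card_split (U W : Submodule F (Fin n → F)) (hUW : U ≤ W) (S : Finset (ProjPoint F n)) :
    (S.filter (fun X => X.1 ≤ W)).card
      = (S.filter (fun X => X.1 ≤ U)).card + (S.filter (fun X => X.1 ≤ W ∧ ¬ X.1 ≤ U)).card := by
  rw [← card_filter_add_card_filter_not (s := S.filter (fun X => X.1 ≤ W)) (fun X => X.1 ≤ U),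
    filter_filter, filter_filter]
  congr 2
  ext X
  simp only [mem_filter]
  constructor
  · rintro ⟨a, _, c⟩; exact ⟨a, c⟩
  · rintro ⟨a, c⟩; exact ⟨a, c.trans hUW, c⟩

lemma two_le_card : 2 ≤ Fintype.card F := Fintype.one_lt_card

lemma card_diff (U W : Submodule F (Fin n → F)) (hUW : U ≤ W) :
    (univ.filter (fun X : ProjPoint F n => X.1 ≤ W ∧ ¬ X.1 ≤ U)).card * (Fintype.card F - 1)
      + Fintype.card F ^ finrank F U = Fintype.card F ^ finrank F W := by
  have h := card_split U W hUW univ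
  have h1 := npts U
  have h2 := npts W
  rw [h, add_mul, h1] at h2
  have := Nat.one_le_pow (finrank F U) (Fintype.card F) (by have := two_le_card (F := F); omega)
  have := Nat.one_le_pow (finrank F W) (Fintype.card F) (by have := two_le_card (F := F); omega)
  omega

lemma card_step (U K : Submodule F (Fin n → F)) (hUW : U ≤ K) (hK : finrank F K = finrank F U + 1) :
    (univ.filter (fun X : ProjPoint F n => X.1 ≤ K ∧ ¬ X.1 ≤ U)).card
      = Fintype.card F ^ finrank F U := by
  have h := card_diff U K hUW
  have h2 := two_le_card (F := F)
  obtain ⟨m, hm⟩ : ∃ m, Fintype.card F = m + 2 := ⟨Fintype.card F - 2, by omega⟩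
  rw [hK, pow_succ] at h
  rw [hm] at h ⊢
  have : m + 2 - 1 = m + 1 := by omega
  rw [this] at h
  have h3 : ((univ.filter (fun X : ProjPoint F n => X.1 ≤ K ∧ ¬ X.1 ≤ U)).card) * (m+1)
    = (m+2) ^ finrank F U * (m+1) := by linarith
  exact Nat.eq_of_mul_eq_mul_right (by omega) h3

lemma cov_card (U W : Submodule F (Fin n → F)) (hUW : U ≤ W) :
    (cov U W).card * Fintype.card F ^ finrank F U * (Fintype.card F - 1)
      + Fintype.card F ^ finrank F U = Fintype.card F ^ finrank F W := by
  rw [← card_diff U W hUW, cover_count U W hUW univ]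
  congr 2
  rw [← smul_eq_mul, ← sum_const]
  apply sum_congr rfl
  intro K hK
  simp only [cov, mem_filter, mem_univ, true_and] at hK
  exact (card_step U K hK.1 hK.2.2).symm

lemma line_card (W : Submodule F (Fin n → F)) (h : finrank F W = 2) :
    (univ.filter (fun X : ProjPoint F n => X.1 ≤ W)).card = Fintype.card F + 1 := by
  have h1 := npts W
  have h2 := two_le_card (F := F)
  obtain ⟨m, hm⟩ : ∃ m, Fintype.card F = m + 2 := ⟨Fintype.card F - 2, by omega⟩
  rw [h, hm] at h1
  rw [hm]
  have e1 : m + 2 - 1 = m + 1 := by omega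
  have e2 : (m+2)^2 - 1 = (m+2+1) * (m+1) := by
    have : (m+2)^2 = (m+2+1) * (m+1) + 1 := by ring
    omega
  rw [e1, e2] at h1
  exact Nat.eq_of_mul_eq_mul_right (by omega) h1

lemma pencil_card (U W : Submodule F (Fin n → F)) (hUW : U ≤ W) (hU : finrank F U = 1)
    (hW : finrank F W = 3) : (cov U W).card = Fintype.card F + 1 := by
  have h1 := cov_card U W hUW
  have h2 := two_le_card (F := F)
  obtain ⟨m, hm⟩ : ∃ m, Fintype.card F = m + 2 := ⟨Fintype.card F - 2, by omega⟩
  rw [hU, hW, hm] at h1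
  rw [hm]
  have e1 : m + 2 - 1 = m + 1 := by omega
  rw [e1] at h1
  have h3 : (cov U W).card * ((m+2)*(m+1)) = (m+2+1) * ((m+2)*(m+1)) := by
    nlinarith
  exact Nat.eq_of_mul_eq_mul_right (by positivity) h3

/-- number of points of a subspace mod p -/
lemma npts_mod {p : ℕ} (hp : p.Prime) (hF : Fintype.card F = p ^ 4) (W : Submodule F (Fin n → F))
    (hW : 1 ≤ finrank F W) :
    ((univ.filter (fun X : ProjPoint F n => X.1 ≤ W)).card : ZMod p) = 1 := by
  have := Fact.mk hp
  have h1 := npts W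
  have hQ : 1 ≤ Fintype.card F := by have := two_le_card (F := F); omega
  have h2 : ((_ : ℕ) : ZMod p) = ((_ : ℕ) : ZMod p) := congrArg (Nat.cast) h1
  rw [Nat.cast_mul, Nat.cast_sub hQ, Nat.cast_sub (Nat.one_le_pow _ _ hQ), hF] at h2
  push_cast at h2
  rw [CharP.cast_eq_zero (ZMod p) p, zero_pow (by omega), zero_pow (by omega)] at h2
  simpa using h2

/-- line intersections agree mod p with the total -/
lemma code_mod {p : ℕ} (hp : p.Prime) (hF : Fintype.card F = p ^ 4) (l : Submodule F (Fin n → F))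
    (hl : finrank F l = 2) (hn : 3 ≤ n) (f : ProjPoint F n → ZMod p) (hf : f ∈ hypCode F p n) :
    ∑ X ∈ univ.filter (fun X : ProjPoint F n => X.1 ≤ l), f X = ∑ X, f X := by
  induction hf using Submodule.span_induction with
  | mem v hv =>
    obtain ⟨H, hH, rfl⟩ := hv
    have e : ∀ W : Submodule F (Fin n → F),
      ∑ X ∈ univ.filter (fun X : ProjPoint F n => X.1 ≤ W), charVec F p n (pointsIn F n H) X
        = ((univ.filter (fun X : ProjPoint F n => X.1 ≤ W ⊓ H)).card : ZMod p) := by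
      intro W
      rw [card_eq_sum_ones, Nat.cast_sum, sum_filter, sum_filter]
      apply sum_congr rfl
      intro X _
      simp only [charVec, pointsIn, Set.indicator, Set.mem_ofPred_eq, le_inf_iff, Pi.one_apply,
        Nat.cast_one]
      by_cases h1 : X.1 ≤ W <;> by_cases h2 : X.1 ≤ H <;> simp [h1, h2]
    have e1 := e l
    have e2 := e ⊤
    have hdim := Submodule.finrank_sup_add_finrank_inf_eq l H
    have hle := Submodule.finrank_le (l ⊔ H)
    rw [finrank_fin_fun] at hle
    rw [npts_mod hp hF _ (by omega)] at e1
    rw [top_inf_eq, npts_mod hp hF _ (by omega)] at e2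
    rw [e1, ← e2]
    simp
  | zero => simp
  | add x y _ _ hx hy => simp only [Pi.add_apply, sum_add_distrib, hx, hy]
  | smul a x _ hx => simp only [Pi.smul_apply, smul_eq_mul, ← mul_sum, hx]

end Covers


section KeyConc

open Finset Classical Polynomial

variable {F : Type} [Field F] {n : ℕ} [Fintype F]

lemma poly_of_code {p : ℕ} (hp : p.Prime) [CharP F p] (hn : 1 ≤ n) (f : ProjPoint F n → ZMod p)
    (hf : f ∈ hypCode F p n) (a b e : Fin n → F)
    (hv : ∀ x y : F, x • a + b + y • e ≠ 0) :
    ∃ g : F → F[X], (∀ x y, (g x).eval y = ZMod.castHom dvd_rfl F (f (mkpt _ (hv x y)))) ∧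
      ∀ m, (∑ x, C (x ^ m) * g x : F[X]).natDegree ≤ m := by
  induction hf using Submodule.span_induction with
  | mem v hv' =>
    obtain ⟨H, hH, rfl⟩ := hv'
    obtain ⟨φ, hφ⟩ := exists_ker hn hH
    refine ⟨fun x => 1 - (C (φ a * x + φ b) + C (φ e) * X) ^ (Fintype.card F - 1), ?_,
      fun m => moment_hyp _ _ _ _⟩
    intro x y
    have e1 : φ (x • a + b + y • e) = φ a * x + φ b + φ e * y := by
      simp only [map_add, map_smul, smul_eq_mul]; ring
    have e2 : (mkpt _ (hv x y)).1 ≤ H ↔ φ a * x + φ b + φ e * y = 0 := by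
      rw [mkpt_le, hφ, e1]
    have hQ : Fintype.card F - 1 ≠ 0 := by have := two_le_card (F := F); omega
    simp only [eval_sub, eval_one, eval_pow, eval_add, eval_C, eval_mul, eval_X]
    simp only [charVec, pointsIn, Set.indicator, Set.mem_ofPred_eq, e2, Pi.one_apply]
    by_cases h : φ a * x + φ b + φ e * y = 0
    · rw [h, zero_pow hQ]; simp
    · rw [FiniteField.pow_card_sub_one_eq_one _ h]; simp [h]
  | zero => exact ⟨0, by simp, by simp⟩
  | add u w _ _ hu hw =>
    obtain ⟨g, h1, h2⟩ := hu
    obtain ⟨g', h1', h2'⟩ := hw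
    refine ⟨g + g', fun x y => by simp [h1, h1'], fun m => ?_⟩
    simp only [Pi.add_apply, mul_add, sum_add_distrib]
    exact (natDegree_add_le _ _).trans (max_le (h2 m) (h2' m))
  | smul c u _ hu =>
    obtain ⟨g, h1, h2⟩ := hu
    refine ⟨fun x => C (ZMod.castHom dvd_rfl F c) * g x, fun x y => ?_, fun m => ?_⟩
    · simp only [eval_mul, eval_C, h1, Pi.smul_apply, smul_eq_mul, map_mul]
    · have : ∑ x, C (x ^ m) * (C (ZMod.castHom dvd_rfl F c) * g x)
          = C (ZMod.castHom dvd_rfl F c) * ∑ x, C (x ^ m) * g x := by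
        rw [mul_sum]; apply sum_congr rfl; intro x _; ring
      rw [this]
      exact (natDegree_C_mul_le _ _).trans (h2 m)

/-- independence of a frame -/
lemma frame_indep {l l' : Submodule F (Fin n → F)} (hl : finrank F l = 2) (hl' : finrank F l' = 2)
    (hne : l ≠ l') {a b e : Fin n → F} (ha0 : a ≠ 0) (ha : a ∈ l) (ha' : a ∈ l') (hb : b ∈ l)
    (he : e ∈ l') (hba : b ∉ Submodule.span F {a}) (hea : e ∉ Submodule.span F {a})
    (c1 c2 c3 : F) (h : c1 • a + c2 • b + c3 • e = 0) : c1 = 0 ∧ c2 = 0 ∧ c3 = 0 := by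
  have h3 : c3 = 0 := by
    by_contra h3
    apply hne
    have hel : e ∈ l := by
      have : c3 • e ∈ l := by
        have h4 : c3 • e = -(c1 • a + c2 • b) := (neg_eq_of_add_eq_zero_right h).symm
        rw [h4]
        exact l.neg_mem (l.add_mem (l.smul_mem _ ha) (l.smul_mem _ hb))
      exact (l.smul_mem_iff h3).1 this
    rw [line_span hl ha0 ha hel hea, line_span hl' ha0 ha' he hea]
  subst h3
  rw [zero_smul, add_zero] at h
  have h2 : c2 = 0 := by
    by_contra h2
    apply hba
    have : c2 • b ∈ Submodule.span F {a} := by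
      have h4 : c2 • b = -(c1 • a) := (neg_eq_of_add_eq_zero_right h).symm
      rw [h4]
      exact Submodule.neg_mem _ (Submodule.smul_mem _ _ (Submodule.mem_span_singleton_self a))
    exact (Submodule.smul_mem_iff _ h2).1 this
  subst h2
  rw [zero_smul, add_zero] at h
  exact ⟨(smul_eq_zero.1 h).resolve_right ha0, rfl, rfl⟩

lemma exists_not_mem {R : ProjPoint F n} {l : Submodule F (Fin n → F)} (hl : finrank F l = 2) :
    ∃ b ∈ l, b ∉ R.1 := by
  by_contra h
  push Not at h
  have h1 : l ≤ R.1 := fun b hb => h b hb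
  have := Submodule.finrank_mono h1
  have := R.2
  omega

lemma key_conc {p : ℕ} (hp : p.Prime) (hF : Fintype.card F = p ^ 4) (hn : 1 ≤ n)
    (f : ProjPoint F n → ZMod p) (hf : f ∈ hypCode F p n) (W l l' : Submodule F (Fin n → F))
    (hlW : l ≤ W) (hlW' : l' ≤ W)
    (hl : finrank F l = 2) (hl' : finrank F l' = 2) (hne : l ≠ l') (R : ProjPoint F n)
    (hR : R.1 ≤ l) (hR' : R.1 ≤ l') (hfR : f R = 0) :
    (univ.filter (fun X : ProjPoint F n => X.1 ≤ l' ∧ f X ≠ 0)).card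
      + (univ.filter (fun X : ProjPoint F n => X.1 ≤ l ∧ f X ≠ 0)).card
        * (p ^ 4 + 1 - (univ.filter (fun X : ProjPoint F n => X.1 ≤ l ∧ f X ≠ 0)).card)
      ≤ (univ.filter (fun X : ProjPoint F n => X.1 ≤ W ∧ f X ≠ 0)).card := by
  have := Fact.mk hp
  have : CharP F p := charP_of_card_eq_prime_pow hF
  obtain ⟨a, ha0, rfl⟩ := exists_mkpt R
  obtain ⟨b, hb, hba⟩ := exists_not_mem (R := mkpt a ha0) hl
  obtain ⟨e, he, hea⟩ := exists_not_mem (R := mkpt a ha0) hl'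
  have ha := mkpt_le.1 hR
  have ha' := mkpt_le.1 hR'
  have hind := frame_indep hl hl' hne ha0 ha ha' hb he hba hea
  have hv : ∀ x y : F, x • a + b + y • e ≠ 0 := by
    intro x y h
    have := hind x 1 y (by rw [one_smul]; exact h)
    exact one_ne_zero this.2.1
  obtain ⟨g, hg, hm⟩ := poly_of_code hp hn f hf a b e hv
  have hk := key_alg g hm 0
  have hinj : Function.Injective (ZMod.castHom (dvd_refl p) F) := RingHom.injective _
  have hne0 : ∀ x y, (g x).eval y ≠ 0 ↔ f (mkpt _ (hv x y)) ≠ 0 := by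
    intro x y
    rw [hg, Ne, map_eq_zero_iff _ hinj]
  have hs0 : (univ.filter (fun X : ProjPoint F n => X.1 ≤ l ∧ f X ≠ 0)).card
      = (univ.filter (fun x => (g x).eval 0 ≠ 0)).card := by
    symm
    apply card_bij (fun x _ => mkpt _ (hv x 0))
    · intro x hx
      rw [mem_filter] at hx ⊢
      refine ⟨mem_univ _, ?_, (hne0 x 0).1 hx.2⟩
      rw [mkpt_le, zero_smul, add_zero]
      exact l.add_mem (l.smul_mem _ ha) hb
    · intro x _ x' _ h
      obtain ⟨c, hc⟩ := mkpt_eq_iff.1 h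
      have := hind (c * x' - x) (c - 1) 0 (by
        rw [← sub_eq_zero] at hc
        rw [← hc]; module)
      have h1 : c = 1 := sub_eq_zero.1 this.2.1
      have h2 := sub_eq_zero.1 this.1
      rw [h1, one_mul] at h2; exact h2.symm
    · intro X hX
      rw [mem_filter] at hX
      obtain ⟨v, hv0, rfl⟩ := exists_mkpt X
      obtain ⟨c, d, hcd⟩ := line_repr hl ha0 ha hb hba (mkpt_le.1 hX.2.1)
      have hd : d ≠ 0 := by
        rintro rfl
        apply hX.2.2
        have : mkpt v hv0 = mkpt a ha0 := mkpt_eq_iff.2 ⟨c, by rw [← hcd]; simp⟩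
        rw [this]; exact hfR
      have heq : mkpt _ (hv (d⁻¹ * c) 0) = mkpt v hv0 := by
        rw [mkpt_eq_iff]
        refine ⟨d⁻¹, ?_⟩
        rw [← hcd, smul_add, smul_smul, smul_smul, inv_mul_cancel₀ hd]; simp
      refine ⟨d⁻¹ * c, ?_, heq⟩
      rw [mem_filter]
      refine ⟨mem_univ _, (hne0 _ _).2 ?_⟩
      rw [heq]; exact hX.2.2
  have hW : (univ.filter (fun X : ProjPoint F n => X.1 ≤ l' ∧ f X ≠ 0)).card
      + ∑ y, (univ.filter (fun x => (g x).eval y ≠ 0)).card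
      ≤ (univ.filter (fun X : ProjPoint F n => X.1 ≤ W ∧ f X ≠ 0)).card := by
    have h1 : ∑ y, (univ.filter (fun x => (g x).eval y ≠ 0)).card
        = ((univ ×ˢ univ : Finset (F × F)).filter (fun z => (g z.1).eval z.2 ≠ 0)).card := by
      rw [card_filter, sum_product_right]
      apply sum_congr rfl
      intro y _
      rw [card_filter]
    have h2 : ((univ ×ˢ univ : Finset (F × F)).filter (fun z => (g z.1).eval z.2 ≠ 0)).card
        = (((univ ×ˢ univ : Finset (F × F)).filter (fun z => (g z.1).eval z.2 ≠ 0)).image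
            (fun z => mkpt _ (hv z.1 z.2))).card := by
      rw [card_image_of_injOn]
      rintro ⟨x, y⟩ _ ⟨x', y'⟩ _ h
      obtain ⟨c, hc⟩ := mkpt_eq_iff.1 h
      have := hind (c * x' - x) (c - 1) (c * y' - y) (by
        rw [← sub_eq_zero] at hc
        rw [← hc]; module)
      obtain ⟨i1, i2, i3⟩ := this
      have h1 : c = 1 := sub_eq_zero.1 i2
      rw [h1, one_mul, sub_eq_zero] at i1 i3
      rw [i1, i3]
    rw [h1, h2, ← card_union_of_disjoint]
    · apply card_le_card
      apply union_subset
      · intro X hX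
        rw [mem_filter] at hX ⊢
        exact ⟨hX.1, hX.2.1.trans hlW', hX.2.2⟩
      · intro X hX
        rw [mem_image] at hX
        obtain ⟨⟨x, y⟩, hz, rfl⟩ := hX
        rw [mem_filter] at hz ⊢
        refine ⟨mem_univ _, ?_, (hne0 _ _).1 hz.2⟩
        rw [mkpt_le]
        exact W.add_mem (W.add_mem (W.smul_mem _ (hlW ha)) (hlW hb)) (W.smul_mem _ (hlW' he))
    · rw [Finset.disjoint_left]
      intro X hX hX'
      rw [mem_image] at hX'
      obtain ⟨⟨x, y⟩, hz, rfl⟩ := hX'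
      rw [mem_filter, mkpt_le] at hX
      obtain ⟨c, d, hcd⟩ := line_repr hl' ha0 ha' he hea hX.2.1
      have := hind (c - x) (-1) (d - y) (by
        rw [← sub_eq_zero] at hcd
        rw [← hcd]; module)
      exact one_ne_zero (neg_eq_zero.1 this.2.1)
  rw [hs0]
  set s := (univ.filter (fun x => (g x).eval 0 ≠ 0)).card with hs
  have hsum : p ^ 4 * s ≤ ∑ y : F, (s - (univ.filter (fun x => (g x).eval y ≠ 0)).card)
      + ∑ y, (univ.filter (fun x => (g x).eval y ≠ 0)).card := by
    rw [← sum_add_distrib, ← hF, ← card_univ, ← smul_eq_mul, ← sum_const]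
    apply sum_le_sum
    intro y _; omega
  have hfin : s * (p ^ 4 + 1 - s) + s * (s - 1) ≤ p ^ 4 * s := by
    have hsQ : s ≤ p ^ 4 := by rw [← hF]; exact card_le_univ _
    rcases Nat.eq_zero_or_pos s with h | h
    · rw [h]; simp
    · rw [← mul_add, mul_comm]
      apply Nat.mul_le_mul_right
      omega
  omega

end KeyConc


section NoPP

open Finset Classical

variable {F : Type} [Field F] {n : ℕ}

lemma desarg (h : (Fin n → F) → Prop) (a v w : Fin n → F)
    (hind : ∀ c1 c2 c3 : F, c1 • a + c2 • v + c3 • w = 0 → c1 = 0 ∧ c2 = 0 ∧ c3 = 0)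
    (rule : ∀ u u' t t' z : Fin n → F, h u → h u' → h t → h t' → z ≠ 0 →
      z ∈ Submodule.span F {u, u'} → z ∈ Submodule.span F {t, t'} →
      u ∉ Submodule.span F {t, t'} → u' ∉ Submodule.span F {u} → t' ∉ Submodule.span F {t} → h z)
    (ha : h a) (hv : h v) (hw : h w) (hav : h (a + v)) (haw : h (a + w)) (k : ℕ) :
    h (a + (k : F) • v) := by
  have h0 : h (a + v + w) := by
    apply rule (a + w) v (a + v) w _ haw hv hav hw
    · intro h0
      exact one_ne_zero (hind 1 1 1 (by rw [← h0]; module)).1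
    · exact Submodule.mem_span_pair.2 ⟨1, 1, by module⟩
    · exact Submodule.mem_span_pair.2 ⟨1, 1, by module⟩
    · intro hh
      obtain ⟨c, d, hcd⟩ := Submodule.mem_span_pair.1 hh
      rw [← sub_eq_zero] at hcd
      obtain ⟨i1, i2, i3⟩ := hind (c - 1) c (d - 1) (by rw [← hcd]; module)
      rw [i2] at i1; simp at i1
    · intro hh
      obtain ⟨c, hcd⟩ := Submodule.mem_span_singleton.1 hh
      rw [← sub_eq_zero] at hcd
      obtain ⟨i1, i2, i3⟩ := hind c (-1) c (by rw [← hcd]; module)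
      simp at i2
    · intro hh
      obtain ⟨c, hcd⟩ := Submodule.mem_span_singleton.1 hh
      rw [← sub_eq_zero] at hcd
      obtain ⟨i1, i2, i3⟩ := hind c c (-1) (by rw [← hcd]; module)
      simp at i3
  induction k with
  | zero => simpa using ha
  | succ k ih =>
    have h1 : h (w - (k : F) • v) := by
      apply rule (a + w) (a + (k : F) • v) v w _ haw ih hv hw
      · intro h0
        exact one_ne_zero (hind 0 (-(k : F)) 1 (by rw [← h0]; module)).2.2
      · exact Submodule.mem_span_pair.2 ⟨1, -1, by module⟩
      · exact Submodule.mem_span_pair.2 ⟨-(k : F), 1, by module⟩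
      · intro hh
        obtain ⟨c, d, hcd⟩ := Submodule.mem_span_pair.1 hh
        rw [← sub_eq_zero] at hcd
        obtain ⟨i1, i2, i3⟩ := hind (-1) c (d - 1) (by rw [← hcd]; module)
        simp at i1
      · intro hh
        obtain ⟨c, hcd⟩ := Submodule.mem_span_singleton.1 hh
        rw [← sub_eq_zero] at hcd
        obtain ⟨i1, i2, i3⟩ := hind (c - 1) (-(k : F)) c (by rw [← hcd]; module)
        rw [i3] at i1; simp at i1
      · intro hh
        obtain ⟨c, hcd⟩ := Submodule.mem_span_singleton.1 hh
        rw [← sub_eq_zero] at hcd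
        obtain ⟨i1, i2, i3⟩ := hind 0 c (-1) (by rw [← hcd]; module)
        simp at i3
    apply rule (a + v + w) (w - (k : F) • v) a v _ h0 h1 ha hv
    · intro h0
      exact one_ne_zero (hind 1 ((k + 1 : ℕ) : F) 0 (by rw [← h0]; module)).1
    · exact Submodule.mem_span_pair.2 ⟨1, -1, by push_cast; module⟩
    · exact Submodule.mem_span_pair.2 ⟨1, ((k + 1 : ℕ) : F), by module⟩
    · intro hh
      obtain ⟨c, d, hcd⟩ := Submodule.mem_span_pair.1 hh
      rw [← sub_eq_zero] at hcd
      obtain ⟨i1, i2, i3⟩ := hind (c - 1) (d - 1) (-1) (by rw [← hcd]; module)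
      simp at i3
    · intro hh
      obtain ⟨c, hcd⟩ := Submodule.mem_span_singleton.1 hh
      rw [← sub_eq_zero] at hcd
      obtain ⟨i1, i2, i3⟩ := hind c (c + k) (c - 1) (by rw [← hcd]; module)
      rw [i1] at i3; simp at i3
    · intro hh
      obtain ⟨c, hcd⟩ := Submodule.mem_span_singleton.1 hh
      rw [← sub_eq_zero] at hcd
      obtain ⟨i1, i2, i3⟩ := hind c (-1) 0 (by rw [← hcd]; module)
      simp at i2

end NoPP


section NoPPConc

open Finset Classical

variable {F : Type} [Field F] {n : ℕ}

lemma not_mem_of_ne {a b : Fin n → F} {ha : a ≠ 0} {hb : b ≠ 0} (h : mkpt a ha ≠ mkpt b hb) :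
    b ∉ Submodule.span F {a} := by
  intro hh
  apply h
  symm
  rw [mkpt_eq_iff]
  exact Submodule.mem_span_singleton.1 hh

lemma ne_of_not_mem {a b : Fin n → F} {ha : a ≠ 0} {hb : b ≠ 0}
    (h : b ∉ Submodule.span F {a}) : mkpt a ha ≠ mkpt b hb := by
  intro hh
  apply h
  exact Submodule.mem_span_singleton.2 (mkpt_eq_iff.1 hh.symm)

lemma line_uniq {X Y : ProjPoint F n} {l m : Submodule F (Fin n → F)} (hl : finrank F l = 2)
    (hm : finrank F m = 2) (h1 : X.1 ≤ l) (h2 : Y.1 ≤ l) (h3 : X.1 ≤ m) (h4 : Y.1 ≤ m)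
    (hne : X ≠ Y) : l = m := by
  obtain ⟨a, ha0, rfl⟩ := exists_mkpt X
  obtain ⟨b, hb0, rfl⟩ := exists_mkpt Y
  rw [mkpt_le] at h1 h2 h3 h4
  rw [line_span hl ha0 h1 h2 (not_mem_of_ne hne), line_span hm ha0 h3 h4 (not_mem_of_ne hne)]

/-- a scaled representation: third point on a line -/
lemma third_point {l : Submodule F (Fin n → F)} (hl : finrank F l = 2) {a : Fin n → F} (ha0 : a ≠ 0)
    {G B : ProjPoint F n} (ha : a ∈ l) (hG : G.1 ≤ l) (hB : B.1 ≤ l) (h1 : mkpt a ha0 ≠ G)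
    (h2 : B ≠ mkpt a ha0) (h3 : B ≠ G) :
    ∃ v : Fin n → F, ∃ hv : v ≠ 0, ∃ hav : a + v ≠ 0, G = mkpt v hv ∧ B = mkpt (a + v) hav := by
  obtain ⟨g, hg0, rfl⟩ := exists_mkpt G
  obtain ⟨b, hb0, rfl⟩ := exists_mkpt B
  rw [mkpt_le] at hG hB
  obtain ⟨c, d, hcd⟩ := line_repr hl ha0 ha hG (not_mem_of_ne h1) hB
  have hc : c ≠ 0 := by
    rintro rfl
    apply h3
    rw [mkpt_eq_iff]; exact ⟨d, by rw [← hcd]; simp⟩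
  have hd : d ≠ 0 := by
    rintro rfl
    apply h2
    rw [mkpt_eq_iff]; exact ⟨c, by rw [← hcd]; simp⟩
  have e : b = c • (a + (c⁻¹ * d) • g) := by
    rw [← hcd, smul_add, smul_smul, mul_inv_cancel_left₀ hc]
  refine ⟨(c⁻¹ * d) • g, ?_, ?_, ?_, ?_⟩
  · rw [Ne, smul_eq_zero]
    push Not
    exact ⟨mul_ne_zero (inv_ne_zero hc) hd, hg0⟩
  · intro h
    rw [h, smul_zero] at e
    exact hb0 e
  · rw [mkpt_eq_iff]
    refine ⟨(c⁻¹ * d)⁻¹, ?_⟩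
    rw [smul_smul, inv_mul_cancel₀ (mul_ne_zero (inv_ne_zero hc) hd), one_smul]
  · rw [mkpt_eq_iff]; exact ⟨c, e.symm⟩

variable [Fintype F]

lemma noPP_conc {p : ℕ} (hp3 : 3 < p) [CharP F p]
    (H : Finset (ProjPoint F n)) (M : Finset (Submodule F (Fin n → F)))
    (hM : ∀ l ∈ M, finrank F l = 2)
    (h1 : ∀ X ∈ H, ∀ Y ∈ H, X ≠ Y → ∃ l ∈ M, X.1 ≤ l ∧ Y.1 ≤ l)
    (h2 : ∀ l ∈ M, ∀ m ∈ M, l ≠ m → ∃ X ∈ H, X.1 ≤ l ∧ X.1 ≤ m)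
    (h3 : ∀ l ∈ M, (univ.filter (fun X : ProjPoint F n => X.1 ≤ l ∧ X ∈ H)).card = p)
    (h4 : ∃ A ∈ H, ∃ l ∈ M, ∃ m ∈ M, ∃ g ∈ M, l ≠ m ∧ A.1 ≤ l ∧ A.1 ≤ m ∧ ¬ A.1 ≤ g) : False := by
  obtain ⟨A, hA, l, hl, m, hm, g, hg, hlm, hAl, hAm, hAg⟩ := h4
  have hlg : l ≠ g := by rintro rfl; exact hAg hAl
  have hmg : m ≠ g := by rintro rfl; exact hAg hAm
  obtain ⟨G1, hG1, hG1l, hG1g⟩ := h2 l hl g hg hlg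
  obtain ⟨G2, hG2, hG2m, hG2g⟩ := h2 m hm g hg hmg
  have hAG1 : A ≠ G1 := by rintro rfl; exact hAg hG1g
  have hAG2 : A ≠ G2 := by rintro rfl; exact hAg hG2g
  have pick : ∀ k ∈ M, ∀ G : ProjPoint F n, ∃ B ∈ H, B.1 ≤ k ∧ B ≠ A ∧ B ≠ G := by
    intro k hk G
    have hlt : ({A, G} : Finset (ProjPoint F n)).card
        < (univ.filter (fun X : ProjPoint F n => X.1 ≤ k ∧ X ∈ H)).card := by
      rw [h3 k hk]
      exact lt_of_le_of_lt card_le_two (by omega)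
    obtain ⟨B, hB, hB'⟩ := exists_mem_notMem_of_card_lt_card hlt
    rw [mem_filter] at hB
    simp only [mem_insert, mem_singleton, not_or] at hB'
    exact ⟨B, hB.2.2, hB.2.1, hB'.1, hB'.2⟩
  obtain ⟨B, hB, hBl, hBA, hBG⟩ := pick l hl G1
  obtain ⟨E, hE, hEm, hEA, hEG⟩ := pick m hm G2
  obtain ⟨a, ha0, rfl⟩ := exists_mkpt A
  have hal := mkpt_le.1 hAl
  have ham := mkpt_le.1 hAm
  obtain ⟨v, hv0, hav0, rfl, rfl⟩ := third_point (hM l hl) ha0 hal hG1l hBl hAG1 hBA hBG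
  obtain ⟨w, hw0, haw0, rfl, rfl⟩ := third_point (hM m hm) ha0 ham hG2m hEm hAG2 hEA hEG
  have hind := frame_indep (hM l hl) (hM m hm) hlm ha0 hal ham (mkpt_le.1 hG1l) (mkpt_le.1 hG2m)
    (not_mem_of_ne hAG1) (not_mem_of_ne hAG2)
  have hmain := desarg (fun u => ∃ hu : u ≠ 0, mkpt u hu ∈ H) a v w hind (by
    rintro u u' t t' z ⟨hu0, hu⟩ ⟨hu0', hu'⟩ ⟨ht0, ht⟩ ⟨ht0', ht'⟩ hz hzu hzt hut huu htt
    obtain ⟨k, hk, hk1, hk2⟩ := h1 _ hu _ hu' (ne_of_not_mem huu)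
    obtain ⟨j, hj, hj1, hj2⟩ := h1 _ ht _ ht' (ne_of_not_mem htt)
    rw [mkpt_le] at hk1 hk2 hj1 hj2
    have ek := line_span (hM k hk) hu0 hk1 hk2 huu
    have ej := line_span (hM j hj) ht0 hj1 hj2 htt
    rw [← ek] at hzu
    rw [← ej] at hzt hut
    have hkj : k ≠ j := by rintro rfl; exact hut hk1
    obtain ⟨X, hX, hXk, hXj⟩ := h2 k hk j hj hkj
    refine ⟨hz, ?_⟩
    by_contra hcon
    apply hkj
    refine line_uniq (X := X) (Y := mkpt z hz) (hM k hk) (hM j hj) hXk (mkpt_le.2 hzu) hXj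
      (mkpt_le.2 hzt) ?_
    rintro rfl; exact hcon hX) ⟨ha0, hA⟩ ⟨hv0, hG1⟩ ⟨hw0, hG2⟩ ⟨hav0, hB⟩ ⟨haw0, hE⟩
  choose hk0 hkH using hmain
  have hinj : Set.InjOn (fun k : ℕ => mkpt (a + (k : F) • v) (hk0 k)) (range p : Finset ℕ) := by
    intro i hi j hj hij
    rw [coe_range, Set.mem_Iio] at hi hj
    obtain ⟨c, hc⟩ := mkpt_eq_iff.1 hij
    rw [← sub_eq_zero] at hc
    obtain ⟨i1, i2, _⟩ := hind (c - 1) (c * j - i) 0 (by rw [← hc]; module)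
    rw [sub_eq_zero] at i1
    rw [i1, one_mul, sub_eq_zero] at i2
    have := (CharP.natCast_eq_natCast F p).1 i2
    rw [Nat.ModEq, Nat.mod_eq_of_lt hj, Nat.mod_eq_of_lt hi] at this
    exact this.symm
  have hcard : (insert (mkpt v hv0)
      ((range p).image (fun k : ℕ => mkpt (a + (k : F) • v) (hk0 k)))).card = p + 1 := by
    rw [card_insert_of_notMem, card_image_of_injOn hinj, card_range]
    intro hmem
    obtain ⟨k, _, hk⟩ := mem_image.1 hmem
    obtain ⟨c, hc⟩ := mkpt_eq_iff.1 hk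
    rw [← sub_eq_zero] at hc
    obtain ⟨i1, _⟩ := hind (-1) (c - k) 0 (by rw [← hc]; module)
    simp at i1
  have hle := card_le_card (show (insert (mkpt v hv0)
      ((range p).image (fun k : ℕ => mkpt (a + (k : F) • v) (hk0 k)))) ⊆
      univ.filter (fun X : ProjPoint F n => X.1 ≤ l ∧ X ∈ H) by
    intro X hX
    rw [mem_insert, mem_image] at hX
    rw [mem_filter]
    rcases hX with rfl | ⟨k, _, rfl⟩
    · exact ⟨mem_univ _, hG1l, hG1⟩
    · exact ⟨mem_univ _, mkpt_le.2 (l.add_mem hal (l.smul_mem _ (mkpt_le.1 hG1l))), hkH k⟩)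
  rw [hcard, h3 l hl] at hle
  omega

lemma card_sub_filter {α : Type} [Fintype α] (r q : α → Prop) [Fintype {x // r x}]
    [DecidablePred (fun x : {x // r x} => q x.1)] [DecidablePred (fun x => r x ∧ q x)] :
    (univ.filter (fun x : {x // r x} => q x.1)).card = (univ.filter (fun x => r x ∧ q x)).card := by
  apply card_bij (fun x _ => x.1)
  · intro x hx
    rw [mem_filter] at hx ⊢
    exact ⟨mem_univ _, x.2, hx.2⟩
  · intro x _ y _ h; exact Subtype.ext h
  · intro x hx
    rw [mem_filter] at hx
    exact ⟨⟨x, hx.2.1⟩, by rw [mem_filter]; exact ⟨mem_univ _, hx.2.2⟩, rfl⟩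

lemma exists_hyp (W U : Submodule F (Fin n → F)) (hUW : U ≤ W) (h : finrank F U + 1 = finrank F W) :
    ∃ H : Submodule F (Fin n → F), finrank F H = n - 1 ∧ H ⊓ W = U := by
  obtain ⟨x, hxW, hxU⟩ : ∃ x ∈ W, x ∉ U := by
    by_contra hcon
    push Not at hcon
    have : W ≤ U := fun x hx => hcon x hx
    have := Submodule.finrank_mono this
    omega
  obtain ⟨φ, hφ, hU⟩ := Submodule.exists_le_ker_of_notMem hxU
  have h0 : φ ≠ 0 := by rintro rfl; exact hφ rfl
  have h1 := Module.Dual.finrank_ker_add_one_of_ne_zero (f := φ) h0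
  rw [finrank_fin_fun] at h1
  refine ⟨LinearMap.ker φ, by omega, ?_⟩
  symm
  apply Submodule.eq_of_le_of_finrank_le (le_inf hU hUW)
  have hlt : LinearMap.ker φ ⊓ W < W := by
    refine lt_of_le_of_ne inf_le_right ?_
    intro he
    rw [← he] at hxW
    exact hφ (LinearMap.mem_ker.1 hxW.1)
  have := Submodule.finrank_lt_finrank_of_lt hlt
  omega

lemma exists_hyp' (W : Submodule F (Fin n → F)) (h : finrank F W < n) :
    ∃ H : Submodule F (Fin n → F), finrank F H = n - 1 ∧ W ≤ H := by
  have hlt : W < ⊤ := by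
    rw [lt_top_iff_ne_top]
    rintro rfl
    rw [finrank_top, finrank_fin_fun] at h
    omega
  obtain ⟨φ, h0, hle⟩ := Submodule.exists_le_ker_of_lt_top W hlt
  have h1 := Module.Dual.finrank_ker_add_one_of_ne_zero (f := φ) h0
  rw [finrank_fin_fun] at h1
  exact ⟨_, by omega, hle⟩

end NoPPConc


section Conc

open Finset Classical

variable {F : Type} [Field F] {n : ℕ} [Fintype F]

/-- the restriction of functions to the points of a subspace -/
def restr (p : ℕ) (W : Submodule F (Fin n → F)) :
    (ProjPoint F n → ZMod p) →ₗ[ZMod p] ({X : ProjPoint F n // X.1 ≤ W} → ZMod p) where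
  toFun f x := f x.1
  map_add' _ _ := rfl
  map_smul' _ _ := rfl

/-- the plane code of a plane of the projective space -/
noncomputable def concPlane {p : ℕ} (hp : p.Prime) (hp3 : 3 < p) (hF : Fintype.card F = p ^ 4)
    (W : Submodule F (Fin n → F)) (hW : finrank F W = 3) (hn : 4 ≤ n) :
    PlaneCode {X : ProjPoint F n // X.1 ≤ W} {l : Submodule F (Fin n → F) // finrank F l = 2 ∧ l ≤ W}
      p where
  I X l := X.1.1 ≤ l.1
  C := (hypCode F p n).map (restr p W)
  join := by
    rintro ⟨X, hX⟩ ⟨Y, hY⟩ hne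
    have hYX : ¬ Y.1 ≤ X.1 := fun h => hne (Subtype.ext (pt_eq_of_le h).symm)
    refine ⟨⟨X.1 ⊔ Y.1, ?_, sup_le hX hY⟩, le_sup_left, le_sup_right⟩
    rw [sup_pt hYX, X.2]
  meet := by
    rintro ⟨l, hl, hlW⟩ ⟨m, hm, hmW⟩ hne
    have h1 := Submodule.finrank_sup_add_finrank_inf_eq l m
    have h2 := Submodule.finrank_mono (sup_le hlW hmW)
    have h3 : finrank F (l ⊓ m : Submodule F (Fin n → F)) < 2 := by
      by_contra h
      have h4 : l ⊓ m = l := Submodule.eq_of_le_of_finrank_le inf_le_left (by omega)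
      have h5 : l = m := Submodule.eq_of_le_of_finrank_eq (by rw [← h4]; exact inf_le_right) (by omega)
      exact hne (Subtype.ext h5)
    refine ⟨⟨⟨l ⊓ m, by omega⟩, inf_le_left.trans hlW⟩, inf_le_left, inf_le_right⟩
  uniq := by
    rintro ⟨X, hX⟩ ⟨Y, hY⟩ ⟨l, hl, hlW⟩ ⟨m, hm, hmW⟩ h1 h2 h3 h4 hne
    exact Subtype.ext (line_uniq hl hm h1 h2 h3 h4 (fun h => hne (Subtype.ext h)))
  cardL := by
    rintro ⟨l, hl, hlW⟩
    rw [← hF, ← line_card l hl]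
    refine (card_sub_filter (fun X : ProjPoint F n => X.1 ≤ W) (fun X => X.1 ≤ l)).trans ?_
    congr 1
    ext X
    simp only [mem_filter]
    exact ⟨fun h => ⟨h.1, h.2.2⟩, fun h => ⟨h.1, h.2.trans hlW, h.2⟩⟩
  cardP := by
    rintro ⟨X, hX⟩
    rw [← hF, ← pencil_card X.1 W hX X.2 hW]
    refine (card_sub_filter (fun l : Submodule F (Fin n → F) => finrank F l = 2 ∧ l ≤ W)
      (fun l => X.1 ≤ l)).trans ?_
    congr 1
    ext l
    simp only [cov, mem_filter]
    rw [X.2]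
    exact ⟨fun h => ⟨h.1, h.2.2, h.2.1.2, h.2.1.1⟩, fun h => ⟨h.1, ⟨h.2.2.2, h.2.2.1⟩, h.2.1⟩⟩
  line_mem := by
    rintro ⟨l, hl, hlW⟩
    obtain ⟨H, hH, hHl⟩ := exists_hyp W l hlW (by omega)
    refine ⟨charVec F p n (pointsIn F n H), Submodule.subset_span ⟨H, hH, rfl⟩, ?_⟩
    ext1 ⟨X, hX⟩
    have : X.1 ≤ l ↔ X.1 ≤ H := by
      rw [← hHl, le_inf_iff]; exact ⟨fun h => h.1, fun h => ⟨h, hX⟩⟩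
    simp only [restr, LinearMap.coe_mk, AddHom.coe_mk, charVec, pointsIn, Set.indicator,
      Set.mem_ofPred_eq, this, Pi.one_apply]
  one_mem := by
    obtain ⟨H, hH, hHl⟩ := exists_hyp' W (by omega)
    refine ⟨charVec F p n (pointsIn F n H), Submodule.subset_span ⟨H, hH, rfl⟩, ?_⟩
    ext1 ⟨X, hX⟩
    have : X.1 ≤ H := hX.trans hHl
    simp only [restr, LinearMap.coe_mk, AddHom.coe_mk, charVec, pointsIn, Set.indicator,
      Set.mem_ofPred_eq, this, Pi.one_apply, if_true]
  key := by
    rintro _ ⟨f, hf, rfl⟩ ⟨R, hR⟩ ⟨l, hl, hlW⟩ ⟨m, hm, hmW⟩ h1 h2 hne h0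
    have hk := key_conc hp hF (by omega) f hf W l m hlW hmW hl hm (fun h => hne (Subtype.ext h))
      R h1 h2 h0
    have e : ∀ l : Submodule F (Fin n → F), l ≤ W →
        (univ.filter (fun X : {X : ProjPoint F n // X.1 ≤ W} => X.1.1 ≤ l ∧ restr p W f X ≠ 0)).card
          = (univ.filter (fun X : ProjPoint F n => X.1 ≤ l ∧ f X ≠ 0)).card := by
      intro l hlW
      refine (card_sub_filter (fun X : ProjPoint F n => X.1 ≤ W) (fun X => X.1 ≤ l ∧ f X ≠ 0)).trans ?_
      congr 1
      ext X
      simp only [mem_filter]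
      exact ⟨fun h => ⟨h.1, h.2.2⟩, fun h => ⟨h.1, h.2.1.trans hlW, h.2⟩⟩
    have e2 := card_sub_filter (fun X : ProjPoint F n => X.1 ≤ W) (fun X => f X ≠ 0)
    refine le_trans (le_of_eq ?_) (hk.trans (le_of_eq e2.symm))
    exact congrArg₂ (· + ·) (e m hmW) (congrArg (fun z => z * (p ^ 4 + 1 - z)) (e l hlW))
  noPP := by
    intro H M h1 h2 h3 h4
    have : CharP F p := by
      have := Fact.mk hp
      exact charP_of_card_eq_prime_pow hF
    refine noPP_conc (F := F) (n := n) hp3 (H.image Subtype.val) (M.image Subtype.val) ?_ ?_ ?_ ?_ ?_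
    · intro l hl
      obtain ⟨l, _, rfl⟩ := mem_image.1 hl
      exact l.2.1
    · intro X hX Y hY hne
      obtain ⟨X, hX1, rfl⟩ := mem_image.1 hX
      obtain ⟨Y, hY1, rfl⟩ := mem_image.1 hY
      obtain ⟨l, hl, hh⟩ := h1 X hX1 Y hY1 (fun h => hne (congrArg _ h))
      exact ⟨l.1, mem_image_of_mem _ hl, hh⟩
    · intro l hl m hm hne
      obtain ⟨l, hl1, rfl⟩ := mem_image.1 hl
      obtain ⟨m, hm1, rfl⟩ := mem_image.1 hm
      obtain ⟨X, hX, hh⟩ := h2 l hl1 m hm1 (fun h => hne (congrArg _ h))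
      exact ⟨X.1, mem_image_of_mem _ hX, hh⟩
    · intro l hl
      obtain ⟨l, hl1, rfl⟩ := mem_image.1 hl
      rw [← h3 l hl1]
      symm
      apply card_bij (fun X _ => X.1)
      · intro X hX
        have hX' := (@mem_filter _ _ (_) _ _).1 hX
        rw [mem_filter]
        exact ⟨mem_univ _, hX'.2.1, mem_image_of_mem _ hX'.2.2⟩
      · intro X _ Y _ h; exact Subtype.ext h
      · intro X hX
        rw [mem_filter] at hX
        obtain ⟨_, hXl, hXH⟩ := hX
        obtain ⟨X, hX, rfl⟩ := mem_image.1 hXH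
        exact ⟨X, (@mem_filter _ _ (_) _ _).2 ⟨mem_univ _, hXl, hX⟩, rfl⟩
    · obtain ⟨a, ha, l, hl, m, hm, g, hg, hne, c1, c2, c3⟩ := h4
      exact ⟨a.1, mem_image_of_mem _ ha, l.1, mem_image_of_mem _ hl, m.1, mem_image_of_mem _ hm,
        g.1, mem_image_of_mem _ hg, fun h => hne (Subtype.ext h), c1, c2, c3⟩

end Conc


section Space

open Finset Classical

/-- first order expansion of powers -/
lemma pow_expand (u : ℤ) (m : ℕ) : ∃ t : ℤ, (u + 1) ^ m = 1 + m * u + t * u ^ 2 := by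
  induction m with
  | zero => exact ⟨0, by simp⟩
  | succ m ih =>
    obtain ⟨t, ht⟩ := ih
    refine ⟨t * (u + 1) + m, ?_⟩
    rw [pow_succ, ht]; push_cast; ring

lemma arithC (p r : ℕ) (hp3 : 3 < p) (hr : 4 ≤ r) (v s θ k D : ℤ)
    (hv : v * (((p ^ 2 : ℕ) : ℤ) ^ 2 - 1)
      = (((p ^ 2 : ℕ) : ℤ) ^ (r + 1) + (-1) ^ r) * (((p ^ 2 : ℕ) : ℤ) ^ r - (-1) ^ r))
    (hθ : θ * (((p ^ 2 : ℕ) : ℤ) ^ 2 - 1) = ((p ^ 2 : ℕ) : ℤ) ^ (2 * r - 2) - 1)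
    (hs : s = 1 + k * p) (hk1 : 1 ≤ k) (hk2 : k ≤ p - 1)
    (hD : v - s - θ = ((p : ℤ) ^ 2 - 1) * D) : False := by
  obtain ⟨u, hu⟩ : ∃ u : ℤ, u = (p : ℤ) ^ 2 - 1 := ⟨_, rfl⟩
  have hq : ((p ^ 2 : ℕ) : ℤ) = u + 1 := by rw [hu]; push_cast; ring
  have hp : (3 : ℤ) < p := by exact_mod_cast hp3
  have hu0 : 0 < u := by nlinarith
  rw [hq] at hv hθ
  rw [← hu] at hD
  obtain ⟨t1, ht1⟩ := pow_expand u (r + 1)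
  obtain ⟨t2, ht2⟩ := pow_expand u r
  obtain ⟨t3, ht3⟩ := pow_expand u (2 * r - 2)
  rw [ht1, ht2] at hv
  rw [ht3] at hθ
  have hc : (((2 * r - 2 : ℕ)) : ℤ) = 2 * r - 2 := by
    rw [Nat.cast_sub (by omega)]; push_cast; ring
  rw [hc] at hθ
  push_cast at hv
  have hε : ((-1 : ℤ) ^ r = 1) ∨ ((-1 : ℤ) ^ r = -1) := neg_one_pow_eq_or ℤ r
  have hfin : ∀ j : ℤ, 1 ≤ j → j ≤ p - 1 → u ∣ 2 * j → False := by
    intro j h1 h2 h3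
    have := Int.le_of_dvd (by omega) h3
    nlinarith
  have hdiv : u ∣ 3 - (-1) ^ r - 2 * s := by
    have key : ∃ T : ℤ, u * (3 - (-1) ^ r - 2 * s) = u * (u * T) := by
      have e : (v - s - θ) * ((u + 1) ^ 2 - 1) = u * D * ((u + 1) ^ 2 - 1) := by rw [hD]
      rw [sub_mul, sub_mul, hv, hθ] at e
      rcases hε with h | h
      · rw [h] at e ⊢
        refine ⟨D * (u + 2) + s + t3 - ((r+1) * r + (r+1) * u * t2 + t1 * (r * u + t2 * u ^ 2) + 2 * t2), ?_⟩
        linear_combination e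
      · rw [h] at e ⊢
        refine ⟨D * (u + 2) + s + t3 - ((r+1) * r + (r+1) * u * t2 + t1 * (r * u + t2 * u ^ 2) + t1 * 2), ?_⟩
        linear_combination e
    obtain ⟨T, hT⟩ := key
    exact ⟨T, mul_left_cancel₀ hu0.ne' hT⟩
  rcases hε with h | h
  · rw [h, hs] at hdiv
    refine hfin k hk1 hk2 ?_
    obtain ⟨T, hT⟩ := hdiv
    refine ⟨-(T * p) - 2 * k, ?_⟩
    have : 2 * k * p = - (u * T) := by linarith
    linear_combination (p : ℤ) * this + (2 * k) * hu
  · rw [h, hs] at hdiv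
    refine hfin (p - k) (by linarith) (by linarith) ?_
    obtain ⟨T, hT⟩ := hdiv
    refine ⟨T * p + 2 * k, ?_⟩
    have : 2 - 2 * k * p = u * T := by linarith
    linear_combination (p : ℤ) * this - (2 * k) * hu

lemma arithA (p r : ℕ) (hp3 : 3 < p) (hr : 4 ≤ r) (v s θ : ℤ) (hs : 0 ≤ s)
    (hv : v * (((p ^ 2 : ℕ) : ℤ) ^ 2 - 1)
      = (((p ^ 2 : ℕ) : ℤ) ^ (r + 1) + (-1) ^ r) * (((p ^ 2 : ℕ) : ℤ) ^ r - (-1) ^ r))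
    (hθ : θ * (((p ^ 2 : ℕ) : ℤ) ^ 2 - 1) = ((p ^ 2 : ℕ) : ℤ) ^ (2 * r - 2) - 1)
    (hle : θ * ((p : ℤ) ^ 6 + 1) ≤ v - s) : False := by
  obtain ⟨q, hq⟩ : ∃ q : ℤ, q = ((p ^ 2 : ℕ) : ℤ) := ⟨_, rfl⟩
  rw [← hq] at hv hθ
  have hp : (3 : ℤ) < p := by exact_mod_cast hp3
  have hq' : q = (p : ℤ) ^ 2 := by rw [hq]; push_cast; ring
  have hq9 : 9 < q := by nlinarith
  have h6 : (p : ℤ) ^ 6 = q ^ 3 := by rw [hq']; ring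
  rw [h6] at hle
  have h1 : θ * (q ^ 3 + 1) * (q ^ 2 - 1) ≤ (v - s) * (q ^ 2 - 1) :=
    mul_le_mul_of_nonneg_right hle (by nlinarith)
  obtain ⟨m, rfl⟩ : ∃ m, r = m + 4 := ⟨r - 4, by omega⟩
  have e1 : 2 * (m + 4) - 2 = 2 * m + 6 := by omega
  rw [e1] at hθ
  set A := q ^ m with hA
  have hA1 : 1 ≤ A := one_le_pow₀ (by linarith)
  have p1 : q ^ (m + 4 + 1) = A * q ^ 5 := by rw [hA]; ring
  have p2 : q ^ (m + 4) = A * q ^ 4 := by rw [hA]; ring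
  have p3 : q ^ (2 * m + 6) = A ^ 2 * q ^ 6 := by rw [hA]; ring
  rw [p1, p2] at hv
  rw [p3] at hθ
  have h2 : (A ^ 2 * q ^ 6 - 1) * (q ^ 3 + 1) ≤
      (A * q ^ 5 + (-1) ^ (m + 4)) * (A * q ^ 4 - (-1) ^ (m + 4)) := by
    have : 0 ≤ s * (q ^ 2 - 1) := mul_nonneg hs (by nlinarith)
    rw [← hv, ← hθ]
    linarith
  have hq3 : 0 < q ^ 3 := by positivity
  have hq4 : 0 < q ^ 4 := by positivity
  have hq5 : 0 < q ^ 5 := by positivity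
  have hA2 : A * q ^ 6 ≤ A ^ 2 * q ^ 6 := by
    apply mul_le_mul_of_nonneg_right _ (by positivity)
    nlinarith
  have h7 : A * q ^ 5 * 9 ≤ A * q ^ 6 := by
    have : 0 ≤ A * q ^ 5 * (q - 9) := by
      apply mul_nonneg (by positivity); linarith
    nlinarith
  have h8 : q ^ 3 ≤ A * q ^ 5 := by
    have a1 : q ^ 3 ≤ q ^ 5 := pow_le_pow_right₀ (by linarith) (by norm_num)
    have a2 : 1 * q ^ 5 ≤ A * q ^ 5 := mul_le_mul_of_nonneg_right hA1 hq5.le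
    linarith
  have h9 : A * q ^ 4 ≤ A * q ^ 5 :=
    mul_le_mul_of_nonneg_left (pow_le_pow_right₀ (by linarith) (by norm_num)) (by linarith)
  have h10 : 0 < A * q ^ 5 := by positivity
  have h11 : 0 < A * q ^ 4 := by positivity
  rcases neg_one_pow_eq_or ℤ (m + 4) with h | h
  · rw [h] at h2; nlinarith
  · rw [h] at h2; nlinarith

end Space


section Final

open Finset Classical

variable {F : Type} [Field F] {n : ℕ} [Fintype F]

/-- number of points of `V` in `W` -/
noncomputable def S (V : Finset (ProjPoint F n)) (W : Submodule F (Fin n → F)) : ℕ :=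
  (V.filter (fun X => X.1 ≤ W)).card

/-- trace of `V` on a plane -/
noncomputable def tr (V : Finset (ProjPoint F n)) (W : Submodule F (Fin n → F)) :
    Finset {X : ProjPoint F n // X.1 ≤ W} := univ.filter (fun x => x.1 ∈ V)

lemma tr_card (V : Finset (ProjPoint F n)) (W : Submodule F (Fin n → F)) :
    (tr V W).card = S V W := by
  rw [tr, card_sub_filter, S]
  congr 1
  ext X
  simp only [mem_filter, mem_univ, true_and]
  exact and_comm

lemma tr_sec {p : ℕ} (hp : p.Prime) (hp3 : 3 < p) (hF : Fintype.card F = p ^ 4)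
    (W : Submodule F (Fin n → F)) (hW : finrank F W = 3) (hn : 4 ≤ n) (V : Finset (ProjPoint F n))
    (l : {l : Submodule F (Fin n → F) // finrank F l = 2 ∧ l ≤ W}) :
    (concPlane hp hp3 hF W hW hn).sec (tr V W) l = S V l.1 := by
  rw [PlaneCode.sec, S]
  apply card_bij (fun X _ => X.1)
  · intro X hX
    have hX' := (@mem_filter _ _ (_) _ _).1 hX
    have h2 := (mem_filter.1 hX'.2.2).2
    rw [mem_filter]
    exact ⟨h2, hX'.2.1⟩
  · intro X _ Y _ h; exact Subtype.ext h
  · intro X hX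
    rw [mem_filter] at hX
    refine ⟨⟨X, hX.2.trans l.2.2⟩, (@mem_filter _ _ (_) _ _).2 ⟨mem_univ _, hX.2, ?_⟩, rfl⟩
    rw [tr, mem_filter]; exact ⟨mem_univ _, hX.1⟩

lemma tr_code {p : ℕ} (hp : p.Prime) (hp3 : 3 < p) (hF : Fintype.card F = p ^ 4)
    (W : Submodule F (Fin n → F)) (hW : finrank F W = 3) (hn : 4 ≤ n) (V : Finset (ProjPoint F n))
    (hV : charVec F p n (V : Set (ProjPoint F n)) ∈ hypCode F p n) :
    PlaneCode.ind (tr V W) ∈ (concPlane hp hp3 hF W hW hn).C := by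
  refine ⟨_, hV, ?_⟩
  ext1 X
  simp [restr, charVec, PlaneCode.ind, Set.indicator, tr]

lemma gapP {p : ℕ} (hp : p.Prime) (hp3 : 3 < p) (hF : Fintype.card F = p ^ 4)
    (W : Submodule F (Fin n → F)) (hW : finrank F W = 3) (hn : 4 ≤ n) (V : Finset (ProjPoint F n))
    (hV : charVec F p n (V : Set (ProjPoint F n)) ∈ hypCode F p n)
    (hs : ∀ l : Submodule F (Fin n → F), finrank F l = 2 → ∃ k, S V l = 1 + k * p)
    (l : Submodule F (Fin n → F)) (hl : finrank F l = 2) (hlW : l ≤ W)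
    (hw : S V W ≤ p ^ 6 + S V l) : S V l ≤ p ^ 2 + 1 ∨ p ^ 4 + 1 ≤ S V l + p ^ 2 := by
  have h := (concPlane hp hp3 hF W hW hn).gap_plane hp hp3 (tr_code hp hp3 hF W hW hn V hV)
    ⟨l, hl, hlW⟩
  rw [tr_sec, tr_card] at h
  exact h (hs l hl) hw

lemma T2P {p : ℕ} (hp : p.Prime) (hp3 : 3 < p) (hF : Fintype.card F = p ^ 4)
    (W : Submodule F (Fin n → F)) (hW : finrank F W = 3) (hn : 4 ≤ n) (V : Finset (ProjPoint F n))
    (hV : charVec F p n (V : Set (ProjPoint F n)) ∈ hypCode F p n)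
    (hs : ∀ l : Submodule F (Fin n → F), finrank F l = 2 → ∃ k, S V l = 1 + k * p)
    (hgap : ∀ l : Submodule F (Fin n → F), finrank F l = 2 →
      (S V l ≤ p ^ 2 + 1 ∨ p ^ 4 + 1 ≤ S V l + p ^ 2))
    (l : Submodule F (Fin n → F)) (hl : finrank F l = 2) (hlW : l ≤ W)
    (hlong : p ^ 4 + 1 ≤ S V l + p ^ 2)
    (hw : S V W ≤ p ^ 6 + S V l) :
    S V l = p ^ 4 + 1 ∨ (S V l + p = p ^ 4 + 1 ∧
      ∃ m : Submodule F (Fin n → F), finrank F m = 2 ∧ S V m + p = p ^ 2 + 1) := by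
  have h := (concPlane hp hp3 hF W hW hn).T2 hp hp3 (tr_code hp hp3 hF W hW hn V hV)
    (fun m => by rw [tr_sec]; exact hs m.1 m.2.1) (fun m => by rw [tr_sec]; exact hgap m.1 m.2.1)
    ⟨l, hl, hlW⟩ (by rw [tr_sec]; exact hlong) (by rw [tr_sec, tr_card]; exact hw)
  rw [tr_sec] at h
  rcases h with h | ⟨h, m, hm⟩
  · exact Or.inl h
  · rw [tr_sec] at hm
    exact Or.inr ⟨h, m.1, m.2.1, hm⟩

lemma T3P {p : ℕ} (hp : p.Prime) (hp3 : 3 < p) (hF : Fintype.card F = p ^ 4)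
    (W : Submodule F (Fin n → F)) (hW : finrank F W = 3) (hn : 4 ≤ n) (V : Finset (ProjPoint F n))
    (hV : charVec F p n (V : Set (ProjPoint F n)) ∈ hypCode F p n)
    (hs : ∀ l : Submodule F (Fin n → F), finrank F l = 2 → ∃ k, S V l = 1 + k * p)
    (hgap : ∀ l : Submodule F (Fin n → F), finrank F l = 2 →
      (S V l ≤ p ^ 2 + 1 ∨ p ^ 4 + 1 ≤ S V l + p))
    (l : Submodule F (Fin n → F)) (hl : finrank F l = 2) (hlW : l ≤ W)
    (h2 : 2 ≤ S V l) (hq : S V l ≤ p ^ 2) :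
    S V W = 1 + S V l * p ^ 4 ∨ (S V W + p ^ 3 + p ^ 2 = (p ^ 2 + 1) * (p ^ 4 + 1) ∧
      ∃ m : Submodule F (Fin n → F), finrank F m = 2 ∧ S V m + p = p ^ 2 + 1) := by
  have h := (concPlane hp hp3 hF W hW hn).T3 hp hp3 (tr_code hp hp3 hF W hW hn V hV)
    (fun m => by rw [tr_sec]; exact hs m.1 m.2.1) (fun m => by rw [tr_sec]; exact hgap m.1 m.2.1)
    ⟨l, hl, hlW⟩ (by rw [tr_sec]; exact h2) (by rw [tr_sec]; exact hq)
  rw [tr_sec, tr_card] at h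
  rcases h with h | ⟨h, m, hm⟩
  · exact Or.inl h
  · rw [tr_sec] at hm
    exact Or.inr ⟨h, m.1, m.2.1, hm⟩

lemma planes_sum (V : Finset (ProjPoint F n)) (l : Submodule F (Fin n → F)) :
    (V.card : ℤ) - S V l = ∑ K ∈ cov l ⊤, ((S V K : ℤ) - S V l) := by
  have h1 := card_split l ⊤ le_top V
  rw [cover_count l ⊤ le_top V] at h1
  have h2 : V.filter (fun X => X.1 ≤ (⊤ : Submodule F (Fin n → F))) = V := by
    apply filter_true_of_mem; intro X _; exact le_top
  rw [h2] at h1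
  rw [h1]
  push_cast
  rw [S, add_sub_cancel_left]
  apply sum_congr rfl
  intro K hK
  simp only [cov, mem_filter, mem_univ, true_and] at hK
  have h3 := card_split l K hK.1 V
  rw [S, h3]; push_cast; ring

lemma planes_card {p r : ℕ} (hr : 4 ≤ r) (hF : Fintype.card F = p ^ 4)
    (l : Submodule F (Fin (r + 1) → F)) (hl : finrank F l = 2) :
    ((cov l ⊤).card : ℤ) * (((p ^ 2 : ℕ) : ℤ) ^ 2 - 1) = ((p ^ 2 : ℕ) : ℤ) ^ (2 * r - 2) - 1 := by
  have h := cov_card l ⊤ le_top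
  have hQ := two_le_card (F := F)
  rw [finrank_top, finrank_fin_fun, hl] at h
  obtain ⟨m, rfl⟩ : ∃ m, r = m + 4 := ⟨r - 4, by omega⟩
  have e : 2 * (m + 4) - 2 = 2 * (m + 3) := by omega
  rw [e, pow_mul]
  have hQ' : ((p ^ 2 : ℕ) : ℤ) ^ 2 = (Fintype.card F : ℤ) := by rw [hF]; push_cast; ring
  rw [hQ']
  have hz : ((_ : ℕ) : ℤ) = ((_ : ℕ) : ℤ) := congrArg (Nat.cast) h
  rw [Nat.cast_add, Nat.cast_mul, Nat.cast_mul, Nat.cast_sub (by omega)] at hz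
  push_cast at hz
  have hQz : (2 : ℤ) ≤ (Fintype.card F : ℤ) := by exact_mod_cast hQ
  have hne : (Fintype.card F : ℤ) ^ 2 ≠ 0 := by positivity
  apply mul_left_cancel₀ hne
  have e3 : (Fintype.card F : ℤ) ^ (m + 4 + 1) = (Fintype.card F : ℤ) ^ 2 * (Fintype.card F : ℤ) ^ (m + 3) := by
    ring
  rw [e3] at hz
  linarith

lemma main_space (p r : ℕ) (hp : p.Prime) (hp3 : 3 < p) (hr : 4 ≤ r)
    (hF : Fintype.card F = p ^ 4) (V : Finset (ProjPoint F (r + 1)))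
    (hv : (V.card : ℤ) * (((p ^ 2 : ℕ) : ℤ) ^ 2 - 1)
      = (((p ^ 2 : ℕ) : ℤ) ^ (r + 1) + (-1) ^ r) * (((p ^ 2 : ℕ) : ℤ) ^ r - (-1) ^ r))
    (hV : charVec F p (r + 1) (V : Set (ProjPoint F (r + 1))) ∈ hypCode F p (r + 1))
    (l : Submodule F (Fin (r + 1) → F)) (hl : finrank F l = 2) :
    S V l = 1 ∨ S V l = p ^ 2 + 1 ∨ S V l = p ^ 4 + 1 := by
  have := Fact.mk hp
  have hn : 4 ≤ r + 1 := by omega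
  have hmodV : (V.card : ZMod p) = 1 := by
    have h : ((_ : ℤ) : ZMod p) = ((_ : ℤ) : ZMod p) := congrArg (Int.cast) hv
    push_cast at h
    have e2 : ((-1 : ZMod p) ^ r) * (-1) ^ r = 1 := by
      rw [← mul_pow]; simp
    rw [CharP.cast_eq_zero (ZMod p) p, zero_pow two_ne_zero, zero_pow two_ne_zero,
      zero_pow (by omega : r + 1 ≠ 0), zero_pow (by omega : r ≠ 0)] at h
    linear_combination -h + e2
  have hs : ∀ l : Submodule F (Fin (r + 1) → F), finrank F l = 2 → ∃ k, S V l = 1 + k * p := by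
    intro l hl
    have h := code_mod hp hF l hl (by omega) _ hV
    have e1 : ∑ X, charVec F p (r + 1) (V : Set (ProjPoint F (r + 1))) X = (V.card : ZMod p) := by
      simp [charVec, Set.indicator]
    have e2 : ∑ X ∈ univ.filter (fun X : ProjPoint F (r + 1) => X.1 ≤ l),
        charVec F p (r + 1) (V : Set (ProjPoint F (r + 1))) X = (S V l : ZMod p) := by
      rw [S, card_filter, Nat.cast_sum, sum_filter, ← sum_filter_add_sum_filter_not univ (fun X => X ∈ V)]
      simp only [charVec, Set.indicator]
      rw [sum_eq_zero (s := univ.filter (fun X => ¬ X ∈ V)), add_zero]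
      · rw [filter_mem_eq_inter, univ_inter]
        apply sum_congr rfl
        intro X hX
        simp [hX]
      · intro X hX
        simp [(mem_filter.1 hX).2]
    rw [e1, e2, hmodV] at h
    have h' : ((S V l : ℕ) : ZMod p) = ((1 : ℕ) : ZMod p) := by rw [h]; simp
    have h3 := (ZMod.natCast_eq_natCast_iff' _ _ p).1 h'
    rw [Nat.mod_eq_of_lt hp.one_lt] at h3
    refine ⟨S V l / p, ?_⟩
    have := Nat.mod_add_div (S V l) p
    rw [h3] at this
    rw [mul_comm]; exact this.symm
  have hplane : ∀ l : Submodule F (Fin (r + 1) → F), finrank F l = 2 →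
      ∃ W : Submodule F (Fin (r + 1) → F), finrank F W = 3 ∧ l ≤ W ∧ S V W ≤ p ^ 6 + S V l := by
    intro l hl
    by_contra hcon
    push Not at hcon
    apply arithA p r hp3 hr V.card (S V l) (cov l ⊤).card (by positivity) hv (planes_card hr hF l hl)
    rw [planes_sum, ← nsmul_eq_mul, ← sum_const]
    apply sum_le_sum
    intro K hK
    simp only [cov, mem_filter, mem_univ, true_and] at hK
    have := hcon K (by omega) hK.1
    zify at this
    linarith
  have hgap : ∀ l : Submodule F (Fin (r + 1) → F), finrank F l = 2 →
      (S V l ≤ p ^ 2 + 1 ∨ p ^ 4 + 1 ≤ S V l + p ^ 2) := by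
    intro l hl
    obtain ⟨W, hW, hlW, hw⟩ := hplane l hl
    exact gapP hp hp3 hF W hW hn V hV hs l hl hlW hw
  have hT2 : ∀ l : Submodule F (Fin (r + 1) → F), finrank F l = 2 → p ^ 4 + 1 ≤ S V l + p ^ 2 →
      S V l = p ^ 4 + 1 ∨ (S V l + p = p ^ 4 + 1 ∧
      ∃ m : Submodule F (Fin (r + 1) → F), finrank F m = 2 ∧ S V m + p = p ^ 2 + 1) := by
    intro l hl hlong
    obtain ⟨W, hW, hlW, hw⟩ := hplane l hl
    exact T2P hp hp3 hF W hW hn V hV hs hgap l hl hlW hlong hw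
  have hgap' : ∀ l : Submodule F (Fin (r + 1) → F), finrank F l = 2 →
      (S V l ≤ p ^ 2 + 1 ∨ p ^ 4 + 1 ≤ S V l + p) := by
    intro l hl
    rcases hgap l hl with h | h
    · exact Or.inl h
    · rcases hT2 l hl h with h | ⟨h, _⟩ <;> omega
  have hC : ∀ l : Submodule F (Fin (r + 1) → F), finrank F l = 2 → 2 ≤ S V l → S V l ≤ p ^ 2 →
      (∀ W : Submodule F (Fin (r + 1) → F), finrank F W = 3 → l ≤ W → ((p : ℤ) ^ 2 - 1) ∣ (S V W : ℤ) - S V l - 1) → False := by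
    intro l hl h2 hq hd
    obtain ⟨k, hk⟩ := hs l hl
    have hk1 : 1 ≤ k := by
      rcases Nat.eq_zero_or_pos k with h | h
      · rw [h] at hk; omega
      · exact h
    have hk2 : k < p := by
      by_contra h
      push Not at h
      have : p * p ≤ k * p := Nat.mul_le_mul_right p h
      rw [hk] at hq
      nlinarith
    have hdiv : ((p : ℤ) ^ 2 - 1) ∣ (V.card : ℤ) - S V l - (cov l ⊤).card := by
      rw [planes_sum]
      have : ((cov l ⊤).card : ℤ) = ∑ K ∈ cov l ⊤, 1 := by simp
      rw [this, ← sum_sub_distrib]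
      apply dvd_sum
      intro K hK
      simp only [cov, mem_filter, mem_univ, true_and] at hK
      exact hd K (by omega) hK.1
    obtain ⟨D, hD⟩ := hdiv
    exact arithC p r hp3 hr V.card (S V l) (cov l ⊤).card k D hv (planes_card hr hF l hl)
      (by rw [hk]; push_cast; ring) (by exact_mod_cast hk1) (by have : (k : ℤ) < p := by exact_mod_cast hk2
                                                                linarith) hD
  have hpp : 3 * p < p ^ 2 := by nlinarith
  have hpp4 : p ^ 4 = p ^ 2 * p ^ 2 := by ring
  have hdvd1 : ∀ l W : Submodule F (Fin (r + 1) → F), S V W = 1 + S V l * p ^ 4 →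
      ((p : ℤ) ^ 2 - 1) ∣ (S V W : ℤ) - S V l - 1 := by
    intro l W h
    refine ⟨S V l * ((p : ℤ) ^ 2 + 1), ?_⟩
    rw [h]; push_cast; ring
  have hA : ∀ l : Submodule F (Fin (r + 1) → F), finrank F l = 2 → S V l + p = p ^ 2 + 1 → False := by
    intro l hl h
    have h2 : 2 ≤ S V l := by omega
    have hq : S V l ≤ p ^ 2 := by omega
    refine hC l hl h2 hq ?_
    intro W hW hlW
    rcases T3P hp hp3 hF W hW hn V hV hs hgap' l hl hlW h2 hq with h3 | ⟨h3, _⟩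
    · exact hdvd1 l W h3
    · refine ⟨(p : ℤ) ^ 4 + 2 * p ^ 2 + 1 - p, ?_⟩
      zify at h h3
      linear_combination h3 - h
  have hB : ∀ l : Submodule F (Fin (r + 1) → F), finrank F l = 2 → 2 ≤ S V l → S V l ≤ p ^ 2 →
      False := by
    intro l hl h2 hq
    refine hC l hl h2 hq ?_
    intro W hW hlW
    rcases T3P hp hp3 hF W hW hn V hV hs hgap' l hl hlW h2 hq with h3 | ⟨_, m, hm, h3⟩
    · exact hdvd1 l W h3
    · exact (hA m hm h3).elim
  rcases hgap l hl with h | h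
  · by_cases h2 : 2 ≤ S V l
    · by_cases hq : S V l ≤ p ^ 2
      · exact (hB l hl h2 hq).elim
      · right; left; omega
    · left
      obtain ⟨k, hk⟩ := hs l hl
      omega
  · rcases hT2 l hl h with h | ⟨_, m, hm, h3⟩
    · exact Or.inr (Or.inr h)
    · exact (hA m hm h3).elim

lemma secant_eq (V : Set (ProjPoint F n)) (W : Submodule F (Fin n → F)) :
    secant F n V W = S V.toFinset W := by
  rw [secant, S, ← Set.ncard_coe_finset]
  congr 1
  ext X
  simp [pointsIn]

end Final

theorem stmt19 (p r : ℕ) (hp : p.Prime) (hp3 : 3 < p) (hr : 4 ≤ r)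
    (F : Type) [Field F] [Fintype F] (hF : Fintype.card F = p ^ 4)
    (V : Set (ProjPoint F (r + 1))) (hV : IsQuasiHermitian F (p ^ 2) r V)
    (hcode : charVec F p (r + 1) V ∈ hypCode F p (r + 1)) :
    ∀ ℓ : Submodule F (Fin (r + 1) → F), finrank F ℓ = 2 →
      (∀ i : ℕ, 1 < i → i < p ^ 2 + 1 → secant F (r + 1) V ℓ ≠ i) ∧
      secant F (r + 1) V ℓ ≠ p ^ 4 - p + 1 ∧
      (secant F (r + 1) V ℓ = 1 ∨ secant F (r + 1) V ℓ = p ^ 2 + 1 ∨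
        secant F (r + 1) V ℓ = p ^ 4 + 1) := by
  classical
  intro ℓ hℓ
  have hcard : V.toFinset.card = V.ncard := by
    rw [← Set.ncard_coe_finset, Set.coe_toFinset]
  have h := main_space p r hp hp3 hr hF V.toFinset (by rw [hcard]; exact hV.1)
    (by rw [Set.coe_toFinset]; exact hcode) ℓ hℓ
  have h' : secant F (r + 1) V ℓ = 1 ∨ secant F (r + 1) V ℓ = p ^ 2 + 1 ∨
        secant F (r + 1) V ℓ = p ^ 4 + 1 := by
    rw [secant_eq]
    convert h
  have hpp : 3 * p < p ^ 2 := by nlinarith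
  have hpp4 : p ^ 2 * 9 < p ^ 4 := by
    have : p ^ 4 = p ^ 2 * p ^ 2 := by ring
    nlinarith
  refine ⟨?_, ?_, h'⟩
  · intro i h1 h2 h3
    omega
  · intro h3
    omega
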